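/- arXiv:2204.10354 — 5 statements merged into one kernel-verified Lean document; each statement's English description precedes it below -/
import Mathlib

section
/- Let Γ be a group. Suppose σ : Γ × Γ → ℤ is a ℤ-valued 2-cocycle on Γ and c is a 2-cycle on Γ with ⟨σ,c⟩ ≠ 0. Suppose further that for every N ∈ ℕ there exist an integer n > N, a finite group Q, a surjective group homomorphism q : Γ → Q, a ℤ-valued 2-cocycle σₙ on Γ of n-Q type, and a function α : Γ → ℤ such that σ(g,h) = σₙ(g,h) + α(g) − α(gh) + α(h) for all g,h ∈ Γ. Then Γ is not matricially stable: there exists an asymptotic representation of Γ that is not perturbable to a genuine representation. -/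
noncomputable section
open scoped Classical

/-- The algebra of "n×n complex matrices" realized as bounded operators on `ℓ²(Fin n)`,
equipped with the ℓ²-operator norm. -/
abbrev Mat (n : ℕ) := EuclideanSpace ℂ (Fin n) →L[ℂ] EuclideanSpace ℂ (Fin n)

/-- The boundary of a 2-chain. -/
def chainBoundary {Γ : Type*} [Group Γ] (c : (Γ × Γ) →₀ ℤ) : Γ → ℤ :=
  fun g => c.sum fun p x =>
    x * ((if p.2 = g then 1 else 0) - (if p.1 * p.2 = g then 1 else 0) +
      (if p.1 = g then 1 else 0))

/-- A 2-chain is a 2-cycle if its boundary vanishes. -/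
def IsTwoCycle {Γ : Type*} [Group Γ] (c : (Γ × Γ) →₀ ℤ) : Prop :=
  chainBoundary c = 0

/-- The boundary support of a 2-chain: all `aᵢ`, `bᵢ`, `aᵢbᵢ` for `(aᵢ,bᵢ)` in the support. -/
def boundarySupport {Γ : Type*} [Group Γ] (c : (Γ × Γ) →₀ ℤ) : Set Γ :=
  ⋃ p ∈ c.support, {p.1, p.2, p.1 * p.2}

/-- The pairing of a ℤ-valued 2-cochain with a 2-chain. -/
def pairInt {Γ : Type*} [Group Γ] (σ : Γ → Γ → ℤ) (c : (Γ × Γ) →₀ ℤ) : ℤ :=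
  c.sum fun p x => x * σ p.1 p.2

/-- ℤ-valued 2-cocycle condition. -/
def IsTwoCocycle {Γ : Type*} [Group Γ] (σ : Γ → Γ → ℤ) : Prop :=
  ∀ g₁ g₂ g₃ : Γ, σ g₂ g₃ - σ (g₁ * g₂) g₃ + σ g₁ (g₂ * g₃) - σ g₁ g₂ = 0

/-- The logarithm defined as a power series centered at 1. -/
def matLog {n : ℕ} (m : Mat n) : Mat n :=
  ∑' k : ℕ, ((-1 : ℂ) ^ k / (k + 1)) • (m - 1) ^ (k + 1)

/-- Trace of an operator. -/
def clmTrace {n : ℕ} (f : Mat n) : ℂ :=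
  LinearMap.trace ℂ (EuclideanSpace ℂ (Fin n)) (f : EuclideanSpace ℂ (Fin n) →ₗ[ℂ] EuclideanSpace ℂ (Fin n))

/-- `ρ` is ε-almost multiplicative on the support of `c`. -/
def AlmostMultOn {Γ : Type*} [Group Γ] {n : ℕ} (ρ : Γ → Mat n)
    (c : (Γ × Γ) →₀ ℤ) (ε : ℝ) : Prop :=
  ∀ p ∈ c.support, IsUnit (ρ p.1) ∧ IsUnit (ρ p.2) ∧
    ‖ρ (p.1 * p.2) * Ring.inverse (ρ p.1) * Ring.inverse (ρ p.2) - 1‖ < ε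

/-- The pairing `⟨ρ,c⟩` between an almost multiplicative map and a 2-chain. -/
def pairRho {Γ : Type*} [Group Γ] {n : ℕ} (ρ : Γ → Mat n) (c : (Γ × Γ) →₀ ℤ) : ℂ :=
  (1 / (2 * Real.pi * Complex.I)) *
    c.sum fun p x => (x : ℂ) *
      clmTrace (matLog (ρ (p.1 * p.2) * Ring.inverse (ρ p.2) * Ring.inverse (ρ p.1)))

/-- A sequence of unitary-valued maps forms an asymptotic representation. -/
def IsAsymptoticRep {Γ : Type*} [Group Γ] (N : ℕ → ℕ) (ρ : ∀ k, Γ → Mat (N k)) : Prop :=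
  (∀ k g, ρ k g ∈ unitary (Mat (N k))) ∧
    ∀ g h : Γ, Filter.Tendsto (fun k => ‖ρ k (g * h) - ρ k g * ρ k h‖)
      Filter.atTop (nhds 0)

/-- An asymptotic representation is perturbable to a genuine representation. -/
def Perturbable {Γ : Type*} [Group Γ] (N : ℕ → ℕ) (ρ : ∀ k, Γ → Mat (N k)) : Prop :=
  ∃ ρ' : ∀ k, Γ →* unitary (Mat (N k)),
    ∀ g : Γ, Filter.Tendsto (fun k => ‖ρ k g - (ρ' k g : Mat (N k))‖)
      Filter.atTop (nhds 0)

/-- Matricial stability. -/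
def MatriciallyStable (Γ : Type*) [Group Γ] : Prop :=
  ∀ (N : ℕ → ℕ) (ρ : ∀ k, Γ → Mat (N k)), IsAsymptoticRep N ρ → Perturbable N ρ

/-!
Fix `n`. As `σ` is cohomologous to a cocycle that factors through a finite quotient `Q` modulo `n`,
the left regular representation of `Q` can be twisted to a projective representation `ρ` of `Γ`
with multiplier `exp (2πi σ / n)`, of dimension `d = |Q|`. As `n → ∞` the multipliers tend to `1`,
so these `ρ` form an asymptotic representation.

Suppose `ψ` is a representation close to `ρ` on the support of `c`. Since `tr ∘ arg` is a continuous
logarithm of `det`, it is additive and conjugation invariant on unitaries close to `1`. Hence the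
real 1-cochain `φ g = tr (arg (ρ g * (ψ g)⋆))` has coboundary `2πd σ / n` on the support of `c`, and
pairing with the cycle `c` gives `2πd ⟨σ, c⟩ / n = 0`, a contradiction.
-/

open Filter Topology Unitary selfAdjoint
open scoped Real

section UnitaryNorms

variable {A : Type*} [NormedRing A] [StarRing A] [CStarRing A]

lemma norm_coe_unitary_le_one (u : unitary A) : ‖(u : A)‖ ≤ 1 := by
  nontriviality A
  exact (CStarRing.norm_coe_unitary u).le

lemma norm_unitary_mul_sub_one_le (u v : unitary A) :
    ‖((u * v : unitary A) - 1 : A)‖ ≤ ‖(u - 1 : A)‖ + ‖(v - 1 : A)‖ := by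
  have split : ((u * v : unitary A) - 1 : A) = u * (v - 1) + (u - 1) := by
    push_cast
    noncomm_ring
  calc ‖((u * v : unitary A) - 1 : A)‖ ≤ ‖(u * (v - 1) : A)‖ + ‖(u - 1 : A)‖ :=
        split ▸ norm_add_le _ _
    _ = ‖(u - 1 : A)‖ + ‖(v - 1 : A)‖ := by rw [CStarRing.norm_coe_unitary_mul, add_comm]

lemma norm_unitary_conj_sub_one (u v : unitary A) :
    ‖((v * u * star v : unitary A) - 1 : A)‖ = ‖(u - 1 : A)‖ := by
  have factor : ((v * u * star v : unitary A) - 1 : A) = v * (u - 1) * (star v : unitary A) := by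
    simp [mul_sub, sub_mul]
  rw [factor, CStarRing.norm_mul_coe_unitary, CStarRing.norm_coe_unitary_mul]

end UnitaryNorms

section CircleExp

lemma norm_circleExp_smul_sub_self_le {E : Type*} [NormedAddCommGroup E] [NormedSpace ℂ E] (θ : ℝ)
    (x : E) : ‖Circle.exp θ • x - x‖ ≤ |θ| * ‖x‖ := by
  have factor : Circle.exp θ • x - x = (Circle.exp θ - 1 : ℂ) • x := by
    rw [sub_smul, one_smul, Circle.smul_def]
  rw [factor, norm_smul, Circle.coe_exp, mul_comm (θ : ℂ)]
  exact mul_le_mul_of_nonneg_right Real.norm_exp_I_mul_ofReal_sub_one_le (norm_nonneg x)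

lemma isLocallyInjective_circleExp : IsLocallyInjective Circle.exp := by
  have factor : (Circle.exp : ℝ → Circle) =
      AddCircle.toCircle ∘ ((↑) : ℝ → AddCircle (2 * π)) := by
    funext x
    simp [AddCircle.toCircle_apply_mk, Real.pi_ne_zero]
  rw [factor]
  exact (AddCircle.isLocalHomeomorph_coe (2 * π)).isLocallyInjective.comp_left
    (AddCircle.injective_toCircle Real.two_pi_pos.ne')

end CircleExp

section ExpUnitary

variable {A : Type*} [CStarAlgebra A]

lemma coe_expUnitary_smul_one (θ : ℝ) :
    (expUnitary (θ • (1 : selfAdjoint A)) : A) = Circle.exp θ • (1 : A) := by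
  rw [expUnitary_coe, Circle.smul_def, Circle.coe_exp, Complex.exp_eq_exp_ℂ, mul_comm,
    ← Algebra.algebraMap_eq_smul_one, NormedSpace.algebraMap_exp_comm, map_mul,
    Algebra.algebraMap_eq_smul_one, Algebra.algebraMap_eq_smul_one]
  simp [smul_comm Complex.I]

lemma norm_expUnitary_smul_one_sub_one_le (θ : ℝ) :
    ‖(expUnitary (θ • (1 : selfAdjoint A)) - 1 : A)‖ ≤ |θ| := by
  rw [coe_expUnitary_smul_one]
  exact (norm_circleExp_smul_sub_self_le θ (1 : A)).trans <|
    mul_le_of_le_one_right (abs_nonneg θ) (norm_coe_unitary_le_one (1 : unitary A))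

lemma argSelfAdjoint_one : argSelfAdjoint (1 : unitary A) = 0 := by
  rw [← expUnitary_zero, argSelfAdjoint_expUnitary (by simpa using Real.pi_pos)]

lemma argSelfAdjoint_expUnitary_smul_one {θ : ℝ} (hθ : |θ| < π) :
    argSelfAdjoint (expUnitary (θ • (1 : selfAdjoint A))) = θ • 1 := by
  refine argSelfAdjoint_expUnitary (lt_of_le_of_lt ?_ hθ)
  rw [norm_smul, Real.norm_eq_abs]
  exact mul_le_of_le_one_right (abs_nonneg θ) (norm_coe_unitary_le_one (1 : unitary A))

end ExpUnitary

section CharacterLog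

variable {A : Type*} [CStarAlgebra A]

/-- The real functional `τ` is a logarithm of the character `D` of the unitary group: `D` turns the
exponential of `x` into the phase `exp (i τ x)`. The model case is the determinant and the trace;
there `τ ∘ arg` is the continuous logarithm of the determinant near `1`. -/
def IsCharacterLog (D : unitary A →* ℂ) (τ : selfAdjoint A →L[ℝ] ℝ) : Prop :=
  ∀ x : selfAdjoint A, D (expUnitary x) = Circle.exp (τ x)

variable {D : unitary A →* ℂ} {τ : selfAdjoint A →L[ℝ] ℝ}

lemma IsCharacterLog.map_arg_eq_of_lift (hD : IsCharacterLog D τ) {X : Type*} [TopologicalSpace X]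
    [PreconnectedSpace X] {w : X → unitary A} (hw : Continuous w)
    (hw_ball : ∀ t, ‖(w t - 1 : A)‖ < 2) {f : X → ℝ} (hf : Continuous f)
    (hDw : ∀ t, D (w t) = Circle.exp (f t)) {t₀ : X} (ht₀ : τ (argSelfAdjoint (w t₀)) = f t₀)
    (t : X) : τ (argSelfAdjoint (w t)) = f t := by
  -- `τ ∘ arg ∘ w` and `f` both lift `D ∘ w` through the covering `Circle.exp`.
  have hcont : Continuous fun t ↦ τ (argSelfAdjoint (w t)) :=
    τ.continuous.comp <| continuousOn_argSelfAdjoint.comp_continuous hw fun t ↦ by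
      simpa [Subtype.dist_eq, dist_eq_norm] using hw_ball t
  have hlift : Circle.exp ∘ (fun t ↦ τ (argSelfAdjoint (w t))) = Circle.exp ∘ f := by
    ext t
    simp only [Function.comp_apply]
    rw [← hD, expUnitary_argSelfAdjoint (hw_ball t), hDw]
  exact congrFun ((T2Space.isSeparatedMap _).eq_of_comp_eq isLocallyInjective_circleExp
    hcont hf hlift t₀ ht₀) t

lemma IsCharacterLog.map_arg_mul (hD : IsCharacterLog D τ) {u v : unitary A}
    (h : ‖(u - 1 : A)‖ + ‖(v - 1 : A)‖ < 2) :
    τ (argSelfAdjoint (u * v)) = τ (argSelfAdjoint u) + τ (argSelfAdjoint v) := by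
  have hu : ‖(u - 1 : A)‖ < 2 := by linarith [norm_nonneg (v - 1 : A)]
  have hv : ‖(v - 1 : A)‖ < 2 := by linarith [norm_nonneg (u - 1 : A)]
  let w (t : unitInterval) : unitary A :=
    expUnitary ((t : ℝ) • argSelfAdjoint u) * expUnitary ((t : ℝ) • argSelfAdjoint v)
  have hw_ball (t : unitInterval) : ‖(w t - 1 : A)‖ < 2 :=
    (norm_unitary_mul_sub_one_le _ _).trans_lt <|
      (add_le_add (norm_expUnitary_smul_argSelfAdjoint_sub_one_le u t.2 hu)
        (norm_expUnitary_smul_argSelfAdjoint_sub_one_le v t.2 hv)).trans_lt h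
  have hDw (t : unitInterval) : D (w t) =
      Circle.exp (t * (τ (argSelfAdjoint u) + τ (argSelfAdjoint v))) := by
    rw [map_mul, hD, hD, map_smul τ, map_smul τ, mul_add, Circle.exp_add, Circle.coe_mul,
      smul_eq_mul, smul_eq_mul]
  have hw_zero : τ (argSelfAdjoint (w 0)) = 0 := by simp [w, argSelfAdjoint_one]
  have hw_one : w 1 = u * v := by
    simp [w, expUnitary_argSelfAdjoint hu, expUnitary_argSelfAdjoint hv]
  simpa [hw_one] using hD.map_arg_eq_of_lift (by fun_prop : Continuous w) hw_ball
    (by fun_prop) hDw (t₀ := 0) (by simpa using hw_zero) 1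

lemma IsCharacterLog.map_arg_conj (hD : IsCharacterLog D τ) {u : unitary A}
    (hu : ‖(u - 1 : A)‖ < 2) (v : unitary A) :
    τ (argSelfAdjoint (v * u * star v)) = τ (argSelfAdjoint u) := by
  let w (t : unitInterval) : unitary A := v * expUnitary ((t : ℝ) • argSelfAdjoint u) * star v
  have hw_ball (t : unitInterval) : ‖(w t - 1 : A)‖ < 2 := by
    rw [norm_unitary_conj_sub_one]
    exact (norm_expUnitary_smul_argSelfAdjoint_sub_one_le u t.2 hu).trans_lt hu
  have hDw (t : unitInterval) : D (w t) = Circle.exp (t * τ (argSelfAdjoint u)) := by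
    rw [map_mul, mul_comm, ← map_mul, ← mul_assoc, star_mul_self, one_mul, hD, map_smul,
      smul_eq_mul]
  have hw_zero : τ (argSelfAdjoint (w 0)) = 0 := by simp [w, argSelfAdjoint_one]
  have hw_one : w 1 = v * u * star v := by simp [w, expUnitary_argSelfAdjoint hu]
  simpa [hw_one] using hD.map_arg_eq_of_lift (by fun_prop : Continuous w) hw_ball
    (by fun_prop) hDw (t₀ := 0) (by simpa using hw_zero) 1

lemma IsCharacterLog.map_arg_add_map_arg (hD : IsCharacterLog D τ) {a b ab a' b' : unitary A}
    {θ : ℝ} (hab : (a * b : A) = Circle.exp θ • (ab : A))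
    (hnear : |θ| + (‖(a - a' : A)‖ + ‖(b - b' : A)‖) < 2) :
    τ (argSelfAdjoint (a * star a')) + τ (argSelfAdjoint (b * star b')) =
      θ * τ 1 + τ (argSelfAdjoint (ab * star (a' * b'))) := by
  let z : unitary A := expUnitary (-θ • 1)
  let v : unitary A := a' * (b * star b') * star a'
  have hz : ‖(z - 1 : A)‖ ≤ |θ| := by
    simpa only [abs_neg] using norm_expUnitary_smul_one_sub_one_le (A := A) (-θ)
  rw [norm_sub_eq, norm_sub_eq b] at hnear
  have hv : ‖(v - 1 : A)‖ = ‖((b * star b' : unitary A) - 1 : A)‖ :=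
    norm_unitary_conj_sub_one _ a'
  have hu_nonneg := norm_nonneg ((a * star a' : unitary A) - 1 : A)
  have hv_nonneg := norm_nonneg (v - 1 : A)
  have hfactor : ab * star (a' * b') = z * (a * star a' * v) := by
    have hz_mul : z * (a * b) = ab := by
      ext
      push_cast
      rw [hab, coe_expUnitary_smul_one, smul_one_mul, smul_smul, ← Circle.exp_add,
        neg_add_cancel, Circle.exp_zero, one_smul]
    simp only [← hz_mul, v, Unitary.star_eq_inv]
    group
  have hz_arg : τ (argSelfAdjoint z) = -θ * τ 1 := by
    have hθ : |-θ| < π := by linarith [abs_neg θ, Real.pi_gt_three]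
    rw [argSelfAdjoint_expUnitary_smul_one hθ, map_smul, smul_eq_mul]
  have hv_arg : τ (argSelfAdjoint v) = τ (argSelfAdjoint (b * star b')) :=
    hD.map_arg_conj (by linarith [abs_nonneg θ]) a'
  have huv := norm_unitary_mul_sub_one_le (a * star a') v
  rw [hfactor, hD.map_arg_mul (u := z) (by linarith),
    hD.map_arg_mul (u := a * star a') (by linarith [abs_nonneg θ]), hz_arg, hv_arg]
  ring

end CharacterLog

section ProjectiveRep

variable {Γ : Type*} [Group Γ]

lemma IsTwoCycle.sum_smul_coboundary_eq_zero {c : (Γ × Γ) →₀ ℤ} (hc : IsTwoCycle c)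
    {M : Type*} [AddCommGroup M] (φ : Γ → M) :
    (c.sum fun p x ↦ x • (φ p.2 - φ (p.1 * p.2) + φ p.1)) = 0 := by
  let b : Γ →₀ ℤ := c.sum fun p x ↦
    x • (Finsupp.single p.2 1 - Finsupp.single (p.1 * p.2) 1 + Finsupp.single p.1 1)
  have hb : b = 0 := by
    ext g
    simpa [b, chainBoundary, Finsupp.finsetSum_apply, Finsupp.sum, Finsupp.single_apply, mul_add]
      using congrFun hc g
  simpa [b, Finsupp.sum] using congrArg (Finsupp.linearCombination ℤ φ) hb

/-- The unitaries `ρ g` of a C⋆-algebra form a projective representation with multiplier `z`, that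
is, `ρ` is multiplicative up to the phases `z g h`. No cocycle condition is imposed on `z`. -/
def IsProjectiveRep {A : Type*} [CStarAlgebra A] (z : Γ → Γ → Circle) (ρ : Γ → unitary A) : Prop :=
  ∀ g h, (ρ g * ρ h : A) = z g h • (ρ (g * h) : A)

lemma IsCharacterLog.sum_phase_mul_eq_zero {A : Type*} [CStarAlgebra A] {D : unitary A →* ℂ}
    {τ : selfAdjoint A →L[ℝ] ℝ} (hD : IsCharacterLog D τ) {c : (Γ × Γ) →₀ ℤ} (hc : IsTwoCycle c)
    {θ : Γ → Γ → ℝ} {ρ : Γ → unitary A} (hρ : IsProjectiveRep (fun g h ↦ Circle.exp (θ g h)) ρ)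
    (ψ : Γ →* unitary A) (hnear : ∀ p ∈ c.support,
      |θ p.1 p.2| + (‖(ρ p.1 - ψ p.1 : A)‖ + ‖(ρ p.2 - ψ p.2 : A)‖) < 2) :
    (c.sum fun p x ↦ x * θ p.1 p.2) * τ 1 = 0 := by
  let φ (g : Γ) : ℝ := τ (argSelfAdjoint (ρ g * star (ψ g)))
  have hφ : ∀ p ∈ c.support, φ p.2 - φ (p.1 * p.2) + φ p.1 = θ p.1 p.2 * τ 1 := fun p hp ↦ by
    have hadd := hD.map_arg_add_map_arg (hρ p.1 p.2) (hnear p hp)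
    rw [← map_mul] at hadd
    linarith
  rw [← hc.sum_smul_coboundary_eq_zero φ, Finsupp.sum_mul]
  exact Finsupp.sum_congr fun p hp ↦ by rw [hφ p hp, zsmul_eq_mul, mul_assoc]

end ProjectiveRep

section Determinant

lemma exp_apply_of_apply_eq_smul {E : Type*} [NormedAddCommGroup E] [NormedSpace ℂ E]
    [CompleteSpace E] {T : E →L[ℂ] E} {v : E} {μ : ℂ} (hv : T v = μ • v) :
    NormedSpace.exp T v = Complex.exp μ • v := by
  have hpow (n : ℕ) : (T ^ n) v = μ ^ n • v := by
    induction n with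
    | zero => simp
    | succ n ih => rw [pow_succ', mul_apply_eq_comp, ih, map_smul, hv, smul_smul, pow_succ]
  have hT := (NormedSpace.exp_series_hasSum_exp' (𝕂 := ℂ) T).mapL (ContinuousLinearMap.apply ℂ E v)
  have hμ := (NormedSpace.exp_series_hasSum_exp' (𝕂 := ℂ) μ).smul_const v
  rw [← Complex.exp_eq_exp_ℂ] at hμ
  exact hT.unique (by simpa [hpow, smul_smul] using hμ)

lemma det_eq_prod_of_apply_basis {K M ι : Type*} [Field K] [AddCommGroup M] [Module K M]
    [Fintype ι] {f : M →ₗ[K] M} (b : Module.Basis ι K M) {μ : ι → K}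
    (hf : ∀ i, f (b i) = μ i • b i) :
    LinearMap.det f = ∏ i, μ i := by
  have hdiag : LinearMap.toMatrix b b f = Matrix.diagonal μ := by
    ext i j
    obtain rfl | hij := eq_or_ne i j
    · simp [LinearMap.toMatrix_apply, hf]
    · simp [LinearMap.toMatrix_apply, hf, hij]
  rw [← LinearMap.det_toMatrix b, hdiag, Matrix.det_diagonal]

variable {E : Type*} [NormedAddCommGroup E] [InnerProductSpace ℂ E] [CompleteSpace E]

variable (E) in
/-- The determinant of unitary operators on `E`, a complex character whose logarithm is
`traceSelfAdjoint E`. -/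
def detUnitary : unitary (E →L[ℂ] E) →* ℂ :=
  LinearMap.det.comp <|
    ContinuousLinearMap.toLinearMapRingHom.toMonoidHom.comp (unitary (E →L[ℂ] E)).subtype

variable [FiniteDimensional ℂ E]

variable (E) in
/-- The trace of self-adjoint operators on `E`, as a real functional; taking the real part loses
nothing, since these traces are real. -/
def traceSelfAdjoint : selfAdjoint (E →L[ℂ] E) →L[ℝ] ℝ :=
  let trace : (E →L[ℂ] E) →L[ℂ] ℂ :=
    (LinearMap.trace ℂ E ∘ₗ ContinuousLinearMap.coeLM ℂ).toContinuousLinearMap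
  Complex.reCLM ∘L trace.restrictScalars ℝ ∘L (selfAdjoint.submodule ℝ (E →L[ℂ] E)).subtypeL

lemma isCharacterLog_detUnitary : IsCharacterLog (detUnitary E) (traceSelfAdjoint E) := by
  intro x
  have hx : ((x : E →L[ℂ] E) : E →ₗ[ℂ] E).IsSymmetric := x.2.isSymmetric
  have hexp (i) : (expUnitary x : E →L[ℂ] E) (hx.eigenvectorBasis rfl i) =
      Complex.exp (Complex.I * hx.eigenvalues rfl i) • hx.eigenvectorBasis rfl i := by
    rw [expUnitary_coe]
    refine exp_apply_of_apply_eq_smul ?_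
    rw [mul_smul]
    exact congrArg (Complex.I • ·) (hx.apply_eigenvectorBasis rfl i)
  calc detUnitary E (expUnitary x) = ∏ i, Complex.exp (Complex.I * hx.eigenvalues rfl i) :=
        det_eq_prod_of_apply_basis (hx.eigenvectorBasis rfl).toBasis (by simpa using hexp)
    _ = Circle.exp (∑ i, hx.eigenvalues rfl i) := by
        rw [← Complex.exp_sum, Circle.coe_exp, ← Finset.mul_sum, mul_comm, Complex.ofReal_sum]
    _ = Circle.exp (traceSelfAdjoint E x) := by
        rw [← hx.re_trace_eq_sum_eigenvalues rfl]
        rfl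

lemma traceSelfAdjoint_one : traceSelfAdjoint E 1 = Module.finrank ℂ E :=
  congrArg Complex.re (LinearMap.trace_one ℂ E)

end Determinant

section Monomial

variable {ι : Type*} [Fintype ι]

/-- The monomial unitary with permutation `e` and phases `w`, from which twisted regular
representations are built: it maps the basis vector `i` to `w i` times the basis vector `e i`. -/
def monomialIsometry (e : Equiv.Perm ι) (w : ι → Circle) :
    EuclideanSpace ℂ ι ≃ₗᵢ[ℂ] EuclideanSpace ℂ ι :=
  (LinearIsometryEquiv.piLpCongrRight 2 fun i ↦
    ⟨DistribMulAction.toLinearEquiv ℂ ℂ (w i), Circle.norm_smul _⟩).trans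
    (.piLpCongrLeft 2 ℂ ℂ e)

lemma monomialIsometry_apply_apply (e : Equiv.Perm ι) (w : ι → Circle) (v : EuclideanSpace ℂ ι)
    (i : ι) : monomialIsometry e w v (e i) = w i * v i := by
  simp [monomialIsometry, LinearIsometryEquiv.piLpCongrLeft_apply, Circle.smul_def]

lemma isProjectiveRep_monomialIsometry {Γ : Type*} [Group Γ] (p : Γ →* Equiv.Perm ι)
    {w : Γ → ι → Circle} {z : Γ → Γ → Circle}
    (hw : ∀ g h i, w g (p h i) * w h i = z g h * w (g * h) i) :
    IsProjectiveRep z fun g ↦ Unitary.linearIsometryEquiv.symm (monomialIsometry (p g) (w g)) := by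
  intro g h
  ext v i
  obtain ⟨i, rfl⟩ := (p (g * h)).surjective i
  have hphase : (w g (p h i) * w h i : ℂ) = z g h * w (g * h) i := by
    simpa using congrArg ((↑) : Circle → ℂ) (hw g h i)
  change monomialIsometry (p g) (w g) (monomialIsometry (p h) (w h) v) (p (g * h) i) =
    z g h * monomialIsometry (p (g * h)) (w (g * h)) v (p (g * h) i)
  rw [monomialIsometry_apply_apply, map_mul, Equiv.Perm.mul_apply, monomialIsometry_apply_apply,
    monomialIsometry_apply_apply, ← mul_assoc, hphase, mul_assoc]

end Monomial

section FiniteQuotient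

variable {Γ Q : Type*} [Group Γ] [Group Q] [Fintype Q] {n : ℕ} [NeZero n]

lemma circleExp_two_pi_mul_intCast_div (m : ℤ) :
    Circle.exp (2 * π * m / n) = ZMod.toCircle (m : ZMod n) := by
  ext
  rw [ZMod.toCircle_intCast, Circle.coe_exp]
  push_cast
  congr 1
  ring

lemma exists_isProjectiveRep_of_cohomologous {q : Γ →* Q} (hq : Function.Surjective q)
    {σ σₙ : Γ → Γ → ℤ} (hσₙ : IsTwoCocycle σₙ) {σ' : Q → Q → ZMod n}
    (hσ' : ∀ g h, (σₙ g h : ZMod n) = σ' (q g) (q h))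
    {α : Γ → ℤ} (hα : ∀ g h, σ g h = σₙ g h + α g - α (g * h) + α h) :
    ∃ ρ : Γ → unitary (Mat (Fintype.card Q)),
      IsProjectiveRep (fun g h ↦ Circle.exp (2 * π * σ g h / n)) ρ := by
  -- On `ℓ²(Q)`, `ρ g` maps `δ_x` to `exp (2πi (α g + σ' (q g) x) / n) • δ_(q g * x)`.
  let e := (Fintype.equivFin Q).symm
  let p : Γ →* Equiv.Perm (Fin (Fintype.card Q)) :=
    (e.symm.permCongrHom.toMonoidHom.comp (MulAction.toPermHom Q Q)).comp q
  let w (g : Γ) (i : Fin (Fintype.card Q)) : Circle :=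
    ZMod.toCircle ((α g : ZMod n) + σ' (q g) (e i))
  refine ⟨_, isProjectiveRep_monomialIsometry p (w := w) fun g h i ↦ ?_⟩
  obtain ⟨k, hk⟩ := hq (e i)
  have hp : e (p h i) = q (h * k) := by simp [p, hk]
  have hcocycle : (α g + σ' (q g) (q (h * k)) + (α h + σ' (q h) (q k)) : ZMod n) =
      σ g h + (α (g * h) + σ' (q (g * h)) (q k)) := by
    have hcast := congrArg (Int.cast : ℤ → ZMod n) (hσₙ g h k)
    push_cast at hcast
    simp only [hα, ← hσ']
    push_cast
    linear_combination hcast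
  rw [circleExp_two_pi_mul_intCast_div]
  simp only [w, ← AddChar.map_add_eq_mul, hp, ← hk, hcocycle]

end FiniteQuotient

section Asymptotic

variable {Γ : Type*} [Group Γ] {N : ℕ → ℕ} {θ : ℕ → Γ → Γ → ℝ}
  {ρ : ∀ k, Γ → unitary (Mat (N k))}

lemma isAsymptoticRep_of_isProjectiveRep
    (hρ : ∀ k, IsProjectiveRep (fun g h ↦ Circle.exp (θ k g h)) (ρ k))
    (hθ : ∀ g h, Tendsto (θ · g h) atTop (𝓝 0)) :
    IsAsymptoticRep N fun k g ↦ (ρ k g : Mat (N k)) := by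
  refine ⟨fun k g ↦ (ρ k g).2, fun g h ↦ ?_⟩
  refine squeeze_zero (fun _ ↦ norm_nonneg _) (fun k ↦ ?_) (by simpa using (hθ g h).abs)
  rw [hρ k g h, norm_sub_rev]
  exact (norm_circleExp_smul_sub_self_le (θ k g h) (ρ k (g * h) : Mat (N k))).trans <|
    mul_le_of_le_one_right (abs_nonneg _) (norm_coe_unitary_le_one (ρ k (g * h)))

lemma not_perturbable_of_isProjectiveRep (hN : ∀ k, 0 < N k)
    (hρ : ∀ k, IsProjectiveRep (fun g h ↦ Circle.exp (θ k g h)) (ρ k))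
    (hθ : ∀ g h, Tendsto (θ · g h) atTop (𝓝 0)) {c : (Γ × Γ) →₀ ℤ} (hc : IsTwoCycle c)
    (hpair : ∀ k, (c.sum fun p x ↦ x * θ k p.1 p.2) ≠ 0) :
    ¬ Perturbable N fun k g ↦ (ρ k g : Mat (N k)) := by
  rintro ⟨ψ, hψ⟩
  have hlim (p : Γ × Γ) : Tendsto (fun k ↦ |θ k p.1 p.2| +
      (‖(ρ k p.1 - ψ k p.1 : Mat (N k))‖ + ‖(ρ k p.2 - ψ k p.2 : Mat (N k))‖)) atTop (𝓝 0) := by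
    simpa using (hθ p.1 p.2).abs.add ((hψ p.1).add (hψ p.2))
  obtain ⟨k, hk⟩ := ((eventually_all_finset c.support).2 fun p _ ↦
    (hlim p).eventually_lt_const two_pos).exists
  have hsum := isCharacterLog_detUnitary.sum_phase_mul_eq_zero hc (hρ k) (ψ k) hk
  rw [traceSelfAdjoint_one, finrank_euclideanSpace_fin] at hsum
  exact mul_ne_zero (hpair k) (Nat.cast_ne_zero.2 (hN k).ne') hsum

end Asymptotic

lemma tendsto_two_pi_mul_intCast_div {n : ℕ → ℕ} (hn : Tendsto n atTop atTop) (m : ℤ) :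
    Tendsto (fun k ↦ 2 * π * m / n k) atTop (𝓝 0) :=
  tendsto_const_nhds.div_atTop (tendsto_natCast_atTop_atTop.comp hn)

lemma sum_mul_two_pi_mul_div {Γ : Type*} [Group Γ] (σ : Γ → Γ → ℤ) (c : (Γ × Γ) →₀ ℤ) (n : ℕ) :
    (c.sum fun p x ↦ x * (2 * π * σ p.1 p.2 / n)) = 2 * π * pairInt σ c / n := by
  simp only [pairInt, Finsupp.sum, Int.cast_sum, Int.cast_mul, Finset.mul_sum, Finset.sum_div]
  exact Finset.sum_congr rfl fun p _ ↦ by ring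

/-- If `σ` is a ℤ-valued 2-cocycle on `Γ`, `c` is a 2-cycle with `⟨σ,c⟩ ≠ 0`,
and for every `N` there are `n > N`, a finite quotient `q : Γ → Q`, a 2-cocycle `σₙ` of
`n`-`Q` type and a 1-cochain `α` with `σ = σₙ + ∂α`, then `Γ` is not matricially stable:
there is an asymptotic representation of `Γ` that is not perturbable to a genuine
representation. -/
theorem stmt0 {Γ : Type*} [Group Γ] (σ : Γ → Γ → ℤ) (c : (Γ × Γ) →₀ ℤ)
    (hσ : IsTwoCocycle σ) (hc : IsTwoCycle c) (hpair : pairInt σ c ≠ 0)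
    (hfin : ∀ N : ℕ, ∃ n : ℕ, N < n ∧
      ∃ (Q : Type) (_ : Group Q) (_ : Fintype Q) (q : Γ →* Q),
        Function.Surjective q ∧
        ∃ σₙ : Γ → Γ → ℤ, IsTwoCocycle σₙ ∧
          (∃ σ' : Q → Q → ZMod n, ∀ g h : Γ, ((σₙ g h : ℤ) : ZMod n) = σ' (q g) (q h)) ∧
          ∃ α : Γ → ℤ, ∀ g h : Γ, σ g h = σₙ g h + α g - α (g * h) + α h) :
    ¬ MatriciallyStable Γ ∧
      ∃ (N : ℕ → ℕ) (ρ : ∀ k, Γ → Mat (N k)), IsAsymptoticRep N ρ ∧ ¬ Perturbable N ρ := by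
  choose n hn Q _ _ q hq σₙ hσₙ hσ' α hα using hfin
  choose σ' hσ' using hσ'
  have (k : ℕ) : NeZero (n k) := ⟨(Nat.zero_le k |>.trans_lt (hn k)).ne'⟩
  choose ρ hρ using fun k ↦ exists_isProjectiveRep_of_cohomologous (hq k) (hσₙ k) (hσ' k) (hα k)
  have hn_top : Tendsto n atTop atTop := tendsto_atTop_mono (fun k ↦ (hn k).le) tendsto_id
  have hθ (g h : Γ) := tendsto_two_pi_mul_intCast_div hn_top (σ g h)
  have hpairing (k : ℕ) : (c.sum fun p x ↦ x * (2 * π * σ p.1 p.2 / n k)) ≠ 0 := by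
    rw [sum_mul_two_pi_mul_div]
    have := NeZero.ne (n k)
    positivity
  have hasymptotic := isAsymptoticRep_of_isProjectiveRep hρ hθ
  have hnot_perturbable :=
    not_perturbable_of_isProjectiveRep (fun _ ↦ Fintype.card_pos) hρ hθ hc hpairing
  exact ⟨fun hstable ↦ hnot_perturbable (hstable _ _ hasymptotic), _, _, hasymptotic,
    hnot_perturbable⟩
end
end

section
/- Let Γ be a finitely generated torsion-free nilpotent group that is neither trivial nor infinite cyclic. Then there exist a ℤ-valued 2-cocycle σ on Γ and a 2-cycle c on Γ with ⟨σ,c⟩ ≠ 0, such that σ is of finite type: for every N ∈ ℕ there exist an integer n > N, a finite group Q, and a surjective group homomorphism q : Γ → Q such that σ is of n-Q type. -/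
noncomputable section
open scoped Classical

/-
A finitely generated nilpotent torsion-free group `Γ ≠ 1` maps onto `ℤ`, so `Γ ≅ N ⋊ ℤ` with `N` of
the same kind, and `N ≠ 1` because `Γ` is not `ℤ`. For `ν : N → ℤ` let `β` be the crossed
homomorphism `ℤ → Hom(N, ℤ)` with `β 1 = ν`; then `σ((m, k), (m', k')) = β k m'` is a cocycle.
Modulo `n` it only involves homomorphisms `N → ℤ/n`, of which there are finitely many, so it factors
through a finite quotient. If `σ` were a coboundary over `ℚ`, then a nonzero multiple of `ν` would
lie in the image of `μ ↦ μ ∘ φ - μ`, where `φ` is the action of `1 ∈ ℤ` on `N`. By nilpotency of `Γ`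
this operator is nilpotent on the nonzero torsion-free group `Hom(N, ℤ)`, so some `ν` has no nonzero
multiple in its image. A cocycle that is not a rational coboundary pairs non-trivially with some
cycle because `ℚ` is an injective `ℤ`-module.
-/

section TorsionFreeNilpotent

open scoped commutatorElement IsMulCommutative

theorem exists_surjective_int_of_isMulTorsionFree (A : Type*) [CommGroup A] [Group.FG A]
    [IsMulTorsionFree A] [Nontrivial A] :
    ∃ χ : A →* Multiplicative ℤ, Function.Surjective χ := by
  have : Module.Finite ℤ (Additive A) := Module.Finite.iff_addGroup_fg.mpr inferInstance
  let b := Module.Free.chooseBasis ℤ (Additive A)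
  obtain ⟨i⟩ : Nonempty (Module.Free.ChooseBasisIndex ℤ (Additive A)) := b.index_nonempty
  exact ⟨AddMonoidHom.toMultiplicativeRight (b.coord i).toAddMonoidHom,
    fun z => ⟨(z.toAdd • b i).toMul, by simp⟩⟩

variable {G : Type*} [Group G]

/-- The homomorphism `g ↦ ⁅x, g⁆` into the center, for an element `x` of the second center. -/
def commutatorHom (x : G) (hx : ∀ g, ⁅x, g⁆ ∈ Subgroup.center G) : G →* Subgroup.center G :=
  MonoidHom.mk' (fun g => ⟨⁅x, g⁆, hx g⟩) fun g h => Subtype.ext <| by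
    have hcomm : g * ⁅x, h⁆ * g⁻¹ = ⁅x, h⁆ := by
      rw [Subgroup.mem_center_iff.mp (hx h), mul_inv_cancel_right]
    calc ⁅x, g * h⁆ = ⁅x, g⁆ * (g * ⁅x, h⁆ * g⁻¹) := by group
      _ = ⁅x, g⁆ * ⁅x, h⁆ := by rw [hcomm]

theorem commutatorHom_eq_one_iff {x : G} (hx : ∀ g, ⁅x, g⁆ ∈ Subgroup.center G) :
    commutatorHom x hx = 1 ↔ x ∈ Subgroup.center G := by
  simp [DFunLike.ext_iff, commutatorHom, Subtype.ext_iff, commutatorElement_eq_one_iff_mul_comm,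
    Subgroup.mem_center_iff, eq_comm]

theorem exists_hom_center_ne_one [Group.IsNilpotent G] [Nontrivial G] :
    ∃ ψ : G →* Subgroup.center G, ψ ≠ 1 := by
  by_cases hc : Subgroup.center G = ⊤
  · refine ⟨((MulEquiv.subgroupCongr hc).trans Subgroup.topEquiv).symm.toMonoidHom, fun h => ?_⟩
    obtain ⟨g, hg⟩ := exists_ne (1 : G)
    exact hg (by simpa using DFunLike.congr_fun h g)
  · have hZ₂ : ¬ Subgroup.upperCentralSeries G 2 ≤ Subgroup.upperCentralSeries G 1 := fun hle =>
      hc <| Subgroup.upperCentralSeries_one G ▸ Subgroup.upperCentralSeries.eq_top one_lt_two.ne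
        ((Subgroup.upperCentralSeries_mono G one_le_two).antisymm hle)
    obtain ⟨x, hx₂, hx₁⟩ := SetLike.not_le_iff_exists.mp hZ₂
    rw [Subgroup.upperCentralSeries_one] at hx₁
    have hx : ∀ g, ⁅x, g⁆ ∈ Subgroup.center G := fun g =>
      Subgroup.upperCentralSeries_one G ▸ Subgroup.mem_upperCentralSeries_succ_iff.mp hx₂ g
    exact ⟨commutatorHom x hx, fun h => hx₁ ((commutatorHom_eq_one_iff hx).mp h)⟩

theorem exists_surjective_int_of_hom_ne_one [Group.FG G] {A : Type*} [CommGroup A]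
    [IsMulTorsionFree A] {ψ : G →* A} (hψ : ψ ≠ 1) :
    ∃ χ : G →* Multiplicative ℤ, Function.Surjective χ := by
  have : IsMulTorsionFree ψ.range :=
    Function.Injective.isMulTorsionFree ψ.range.subtype ψ.range.subtype_injective
  have : Nontrivial ψ.range := by
    rwa [Subgroup.nontrivial_iff_ne_bot, Ne, MonoidHom.range_eq_bot_iff]
  obtain ⟨χ, hχ⟩ := exists_surjective_int_of_isMulTorsionFree ψ.range
  exact ⟨χ.comp ψ.rangeRestrict, hχ.comp ψ.rangeRestrict_surjective⟩

theorem not_isOfFinOrder_subgroup (htf : ∀ g : G, g ≠ 1 → ¬ IsOfFinOrder g) (H : Subgroup G) :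
    ∀ h : H, h ≠ 1 → ¬ IsOfFinOrder h := fun h hh hfin =>
  htf h (fun h' => hh (Subtype.ext h')) (H.subtype.isOfFinOrder hfin)

theorem nontrivial_monoidHom_of_surjective {A : Type*} [MulOneClass A] [Nontrivial A] {χ : G →* A}
    (hχ : Function.Surjective χ) : Nontrivial (G →* A) := by
  obtain ⟨a, ha⟩ := exists_ne (1 : A)
  obtain ⟨g, rfl⟩ := hχ a
  exact ⟨χ, 1, fun h => ha (by rw [h, MonoidHom.one_apply])⟩

theorem exists_surjective_int_of_isNilpotent [Group.FG G] [Group.IsNilpotent G] [Nontrivial G]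
    (htf : ∀ g : G, g ≠ 1 → ¬ IsOfFinOrder g) :
    ∃ χ : G →* Multiplicative ℤ, Function.Surjective χ := by
  obtain ⟨ψ, hψ⟩ := exists_hom_center_ne_one (G := G)
  have : IsMulTorsionFree (Subgroup.center G) :=
    IsMulTorsionFree.of_not_isOfFinOrder (not_isOfFinOrder_subgroup htf (Subgroup.center G))
  exact exists_surjective_int_of_hom_ne_one hψ

end TorsionFreeNilpotent

section RationalCoboundary

theorem exists_linearMap_comp_eq_of_ker_le_ker {R M P Q : Type*} [Ring R]
    [AddCommGroup M] [Module R M] [AddCommGroup P] [Module R P] [AddCommGroup Q] [Module R Q]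
    (hQ : Module.Baer R Q) (f : M →ₗ[R] P) (g : M →ₗ[R] Q)
    (h : LinearMap.ker f ≤ LinearMap.ker g) :
    ∃ F : P →ₗ[R] Q, F ∘ₗ f = g := by
  obtain ⟨F, hF⟩ := hQ.extension_property ((LinearMap.ker f).liftQ f le_rfl)
    (LinearMap.ker_eq_bot.mp (Submodule.ker_liftQ_eq_bot _ _ _ le_rfl))
    ((LinearMap.ker f).liftQ g h)
  exact ⟨F, LinearMap.ext fun m => LinearMap.congr_fun hF (Submodule.Quotient.mk m)⟩

variable {Γ Δ : Type*} [Group Γ] [Group Δ]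

/-- The 2-cochain `σ` is a coboundary over `ℚ`: the obstruction to pairing non-trivially with some
2-cycle. -/
def IsRationalCoboundary (σ : Γ → Γ → ℤ) : Prop :=
  ∃ f : Γ → ℚ, ∀ g h, (σ g h : ℚ) = f g + f h - f (g * h)

theorem IsRationalCoboundary.comp {σ : Δ → Δ → ℤ} (hσ : IsRationalCoboundary σ) (p : Γ →* Δ) :
    IsRationalCoboundary fun g h => σ (p g) (p h) := by
  obtain ⟨f, hf⟩ := hσ
  exact ⟨f ∘ p, fun g h => by simp [hf]⟩

variable (Γ) in
/-- The boundary of 2-chains as a `ℤ`-linear map, whose underlying function is `chainBoundary`. -/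
def boundaryMap : ((Γ × Γ) →₀ ℤ) →ₗ[ℤ] (Γ →₀ ℤ) :=
  Finsupp.linearCombination ℤ fun p =>
    Finsupp.single p.2 1 - Finsupp.single (p.1 * p.2) 1 + Finsupp.single p.1 1

theorem coe_boundaryMap (c : (Γ × Γ) →₀ ℤ) : ⇑(boundaryMap Γ c) = chainBoundary c := by
  funext g
  simp [boundaryMap, chainBoundary, Finsupp.linearCombination_apply, Finsupp.sum,
    Finsupp.finsetSum_apply, Finsupp.single_apply, mul_add]

theorem isTwoCycle_iff_mem_ker {c : (Γ × Γ) →₀ ℤ} :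
    IsTwoCycle c ↔ c ∈ LinearMap.ker (boundaryMap Γ) := by
  rw [IsTwoCycle, ← coe_boundaryMap, LinearMap.mem_ker, ← Finsupp.coe_zero, DFunLike.coe_fn_eq]

theorem exists_pairInt_ne_zero {σ : Γ → Γ → ℤ} (hσ : ¬ IsRationalCoboundary σ) :
    ∃ c, IsTwoCycle c ∧ pairInt σ c ≠ 0 := by
  by_contra! hzero
  let s : ((Γ × Γ) →₀ ℤ) →ₗ[ℤ] ℚ := Finsupp.linearCombination ℤ fun p => (σ p.1 p.2 : ℚ)
  have hs : ∀ c, s c = pairInt σ c := fun c => by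
    simp [s, pairInt, Finsupp.linearCombination_apply, Finsupp.sum]
  have hker : LinearMap.ker (boundaryMap Γ) ≤ LinearMap.ker s := fun c hc => by
    rw [LinearMap.mem_ker, hs, hzero c (isTwoCycle_iff_mem_ker.mpr hc), Int.cast_zero]
  obtain ⟨F, hF⟩ :=
    exists_linearMap_comp_eq_of_ker_le_ker (Module.Baer.of_divisible ℚ) (boundaryMap Γ) s hker
  refine hσ ⟨fun g => F (Finsupp.single g 1), fun g h => ?_⟩
  have hgh := LinearMap.congr_fun hF (Finsupp.single (g, h) 1)
  simp only [LinearMap.comp_apply, boundaryMap, s, Finsupp.linearCombination_single, one_smul,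
    map_add, map_sub] at hgh
  rw [← hgh]
  ring

end RationalCoboundary

section FiniteType

variable {Γ Δ : Type*} [Group Γ] [Group Δ]

theorem IsTwoCocycle.comp {σ : Δ → Δ → ℤ} (hσ : IsTwoCocycle σ) (p : Γ →* Δ) :
    IsTwoCocycle fun g h => σ (p g) (p h) := fun g₁ g₂ g₃ => by
  simpa only [map_mul] using hσ (p g₁) (p g₂) (p g₃)

/-- The 2-cochain `σ` is of `n`-`Q` type for some finite quotient `Q`. -/
def IsFiniteTypeMod (σ : Γ → Γ → ℤ) (n : ℕ) : Prop :=
  ∃ (Q : Type) (_ : Group Q) (_ : Fintype Q) (q : Γ →* Q), Function.Surjective q ∧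
    ∃ σ' : Q → Q → ZMod n, ∀ g h : Γ, ((σ g h : ℤ) : ZMod n) = σ' (q g) (q h)

theorem IsFiniteTypeMod.comp {σ : Δ → Δ → ℤ} {n : ℕ} (hσ : IsFiniteTypeMod σ n) {p : Γ →* Δ}
    (hp : Function.Surjective p) : IsFiniteTypeMod (fun g h => σ (p g) (p h)) n := by
  obtain ⟨Q, _, _, q, hq, σ', hσ'⟩ := hσ
  exact ⟨Q, _, ‹_›, q.comp p, hq.comp hp, σ', fun g h => hσ' (p g) (p h)⟩

theorem isFiniteTypeMod_of_con {σ : Γ → Γ → ℤ} {n : ℕ} (r : Con Γ) [Finite r.Quotient]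
    (hσ : ∀ {g g' h h'}, r g g' → r h h' → (σ g h : ZMod n) = σ g' h') : IsFiniteTypeMod σ n := by
  obtain ⟨Q, _, _, ⟨e⟩⟩ := Finite.exists_type_univ_nonempty_mulEquiv.{_, 0} r.Quotient
  refine ⟨Q, _, ‹_›, e.toMonoidHom.comp r.mk', e.surjective.comp r.mk'_surjective,
    fun a b => Quotient.liftOn₂' (e.symm a) (e.symm b) (fun g h => (σ g h : ZMod n))
      fun _ _ _ _ => hσ, fun g h => ?_⟩
  simp only [MulEquiv.toMonoidHom_eq_coe, MonoidHom.comp_apply, MonoidHom.coe_coe,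
    MulEquiv.symm_apply_apply]
  rfl

end FiniteType

section CrossedHom

variable {N H A : Type*} [Group N] [Group H] [CommGroup A] {φ : H →* MulAut N}

/-- A crossed homomorphism from `H` to the dual `N →* A`, on which `H` acts from the right by
precomposition with `φ`: that is, `β (k * l) = (β k ∘ φ l) * β l`. -/
def IsCrossedHom (φ : H →* MulAut N) (β : H → N →* A) : Prop :=
  ∀ k l m, β (k * l) m = β k (φ l m) * β l m

theorem IsCrossedHom.map_one {β : H → N →* A} (hβ : IsCrossedHom φ β) : β 1 = 1 := by
  ext m
  simpa using hβ 1 1 m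

theorem IsCrossedHom.postcomp {B : Type*} [CommGroup B] {β : H → N →* A} (hβ : IsCrossedHom φ β)
    (f : A →* B) : IsCrossedHom φ fun k => f.comp (β k) := fun k l m => by
  simp only [MonoidHom.comp_apply, hβ k l m, map_mul]

/-- The 2-cochain `((m, k), (m', k')) ↦ β k m'` on `N ⋊[φ] H`, which is a cocycle when `β` is a
crossed homomorphism. -/
def crossedCocycle (φ : H →* MulAut N) (β : H → N →* Multiplicative ℤ) (g h : N ⋊[φ] H) : ℤ :=
  (β g.right h.left).toAdd

theorem IsCrossedHom.isTwoCocycle {β : H → N →* Multiplicative ℤ} (hβ : IsCrossedHom φ β) :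
    IsTwoCocycle (crossedCocycle φ β) := fun g₁ g₂ g₃ => by
  simp only [crossedCocycle, SemidirectProduct.mul_left, SemidirectProduct.mul_right, map_mul,
    toAdd_mul, hβ g₁.right g₂.right g₃.left]
  ring

/-- The congruence identifying elements of `N ⋊[φ] H` that neither `β` nor the action on `N →* A`
nor the elements of `N →* A` distinguish; it is the source of the finite quotients. -/
def crossedCon {β : H → N →* A} (hβ : IsCrossedHom φ β) : Con (N ⋊[φ] H) where
  r g h := β g.right = β h.right ∧
    (∀ μ : N →* A, ∀ m, μ (φ g.right m) = μ (φ h.right m)) ∧ ∀ μ : N →* A, μ g.left = μ h.left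
  iseqv :=
    ⟨fun _ => ⟨rfl, fun _ _ => rfl, fun _ => rfl⟩,
      fun h => ⟨h.1.symm, fun μ m => (h.2.1 μ m).symm, fun μ => (h.2.2 μ).symm⟩,
      fun h h' => ⟨h.1.trans h'.1, fun μ m => (h.2.1 μ m).trans (h'.2.1 μ m),
        fun μ => (h.2.2 μ).trans (h'.2.2 μ)⟩⟩
  mul' := by
    rintro g g' h h' ⟨hβg, hφg, hg⟩ ⟨hβh, hφh, hh⟩
    refine ⟨MonoidHom.ext fun m => ?_, fun μ m => ?_, fun μ => ?_⟩
    · rw [SemidirectProduct.mul_right, SemidirectProduct.mul_right, hβ, hβ, hβg, hβh, hφh]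
    · have hφ : μ (φ g'.right (φ h.right m)) = μ (φ g'.right (φ h'.right m)) :=
        hφh (μ.comp (φ g'.right).toMonoidHom) m
      simpa only [SemidirectProduct.mul_right, map_mul, MulAut.mul_apply, hφg] using hφ
    · have hφ : μ (φ g'.right h.left) = μ (φ g'.right h'.left) :=
        hh (μ.comp (φ g'.right).toMonoidHom)
      simp only [SemidirectProduct.mul_left, map_mul, hg, hφg, hφ]

theorem finite_monoidHom_of_fg (G B : Type*) [Group G] [Group.FG G] [Monoid B] [Finite B] :
    Finite (G →* B) := by
  obtain ⟨S, hS, hfin⟩ := Group.fg_iff.mp ‹Group.FG G›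
  have := hfin.to_subtype
  exact Finite.of_injective (fun (f : G →* B) (s : S) => f s) fun f f' h =>
    MonoidHom.eq_of_eqOn_dense hS fun s hs => congrFun h ⟨s, hs⟩

theorem finite_quotient_crossedCon [Group.FG N] [Finite A] {β : H → N →* A}
    (hβ : IsCrossedHom φ β) : Finite (crossedCon hβ).Quotient := by
  have := finite_monoidHom_of_fg N A
  let F (g : N ⋊[φ] H) : (N →* A) × ((N →* A) → N →* A) × ((N →* A) → A) :=
    (β g.right, fun μ => μ.comp (φ g.right).toMonoidHom, fun μ => μ g.left)
  have hF {g h : N ⋊[φ] H} (hgh : F g = F h) : crossedCon hβ g h := by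
    simp only [F, Prod.mk.injEq, funext_iff] at hgh
    exact ⟨hgh.1, fun μ m => DFunLike.congr_fun (hgh.2.1 μ) m, hgh.2.2⟩
  exact Finite.of_injective (fun a : (crossedCon hβ).Quotient => F (Quotient.out a))
    fun a b hab => Quotient.out_equiv_out.mp (hF hab)

theorem IsCrossedHom.isFiniteTypeMod [Group.FG N] {β : H → N →* Multiplicative ℤ}
    (hβ : IsCrossedHom φ β) {n : ℕ} (hn : n ≠ 0) : IsFiniteTypeMod (crossedCocycle φ β) n := by
  have : NeZero n := ⟨hn⟩
  let βₙ (k : H) : N →* Multiplicative (ZMod n) :=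
    (AddMonoidHom.toMultiplicative (Int.castAddHom (ZMod n))).comp (β k)
  have hβₙ : IsCrossedHom φ βₙ := hβ.postcomp _
  have : Finite (crossedCon hβₙ).Quotient := finite_quotient_crossedCon hβₙ
  refine isFiniteTypeMod_of_con (crossedCon hβₙ) fun {g g' h h'} hg hh => ?_
  have : βₙ g.right h.left = βₙ g'.right h'.left := by rw [hg.1, hh.2.2]
  exact Multiplicative.ofAdd.injective this

end CrossedHom

section CrossedHomInt

variable {N A : Type*} [Group N] [CommGroup A]

theorem exists_isCrossedHom_apply_ofAdd_one (φ : Multiplicative ℤ →* MulAut N) (μ : N →* A) :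
    ∃ β : Multiplicative ℤ → N →* A, IsCrossedHom φ β ∧ β (.ofAdd 1) = μ := by
  let ψ : Multiplicative ℤ →* MulAut (N →* A) :=
    MonoidHom.mk' (fun k => (φ k).symm.monoidHomCongrLeft) fun k l => by
      ext ν m
      simp [mul_comm k l]
  let c : Multiplicative ℤ →* (N →* A) ⋊[ψ] Multiplicative ℤ := zpowersHom _ ⟨μ, .ofAdd 1⟩
  have hc_one : c (.ofAdd 1) = ⟨μ, .ofAdd 1⟩ := by simp [c]
  have hc_right (k : Multiplicative ℤ) : (c k).right = k := by
    have hid : SemidirectProduct.rightHom.comp c = MonoidHom.id _ :=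
      MonoidHom.ext_mint (by simp [hc_one])
    exact DFunLike.congr_fun hid k
  refine ⟨fun k => (c k).left, fun k l m => ?_, congrArg SemidirectProduct.left hc_one⟩
  have hmul : (c (k * l)).left = (c l).left * ψ l (c k).left := by
    rw [mul_comm k l, map_mul, SemidirectProduct.mul_left, hc_right]
  exact (DFunLike.congr_fun hmul m).trans (mul_comm _ _)

end CrossedHomInt

section Coboundary

open SemidirectProduct (inl inr)

variable {N H : Type*} [Group N] [Group H] {φ : H →* MulAut N}

theorem exists_int_hom_of_rat_hom [Group.FG N] (f : N →* Multiplicative ℚ) :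
    ∃ n : ℤ, n ≠ 0 ∧ ∃ μ : N →* Multiplicative ℤ, ∀ m, ((μ m).toAdd : ℚ) = n * (f m).toAdd := by
  obtain ⟨S, hS, hfin⟩ := Group.fg_iff.mp ‹Group.FG N›
  obtain ⟨n, hn⟩ := IsLocalization.exist_integer_multiples_of_finset (nonZeroDivisors ℤ)
    (hfin.toFinset.image fun s => (f s).toAdd)
  let ι : Multiplicative ℤ →* Multiplicative ℚ := AddMonoidHom.toMultiplicative (Int.castAddHom ℚ)
  have hι : Function.Injective ι := Int.cast_injective (α := ℚ)
  have hrange : (ι.range).comap (f ^ (n : ℤ)) = ⊤ := by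
    rw [eq_top_iff, ← hS, Subgroup.closure_le]
    intro s hs
    obtain ⟨z, hz⟩ := hn _ (Finset.mem_image_of_mem _ (hfin.mem_toFinset.mpr hs))
    exact ⟨.ofAdd z, Multiplicative.toAdd.injective (by simpa [ι] using hz)⟩
  let μ : N →* Multiplicative ℤ := (MonoidHom.ofInjective hι).symm.toMonoidHom.comp
    ((f ^ (n : ℤ)).codRestrict ι.range fun m => Subgroup.mem_comap.mp (hrange ▸ Subgroup.mem_top m))
  have hμ (m : N) : ι (μ m) = f m ^ (n : ℤ) := MonoidHom.apply_ofInjective_symm hι _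
  exact ⟨n, nonZeroDivisors.coe_ne_zero n, μ, fun m =>
    (congrArg Multiplicative.toAdd (hμ m)).trans (by rw [toAdd_zpow, zsmul_eq_mul])⟩

theorem IsCrossedHom.exists_zpow_eq_of_isRationalCoboundary [Group.FG N]
    {β : H → N →* Multiplicative ℤ} (hβ : IsCrossedHom φ β)
    (hσ : IsRationalCoboundary (crossedCocycle φ β)) :
    ∃ n : ℤ, n ≠ 0 ∧ ∃ μ : N →* Multiplicative ℤ, ∀ k m, β k m ^ n = μ m / μ (φ k m) := by
  obtain ⟨f, hf⟩ := hσ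
  have hinl (m : N) (g : N ⋊[φ] H) : f (inl m * g) = f (inl m) + f g := by
    have := hf (inl m) g
    simp only [crossedCocycle, SemidirectProduct.right_inl, hβ.map_one, MonoidHom.one_apply,
      toAdd_one, Int.cast_zero] at this
    linarith
  have hβf (k : H) (m : N) : ((β k m).toAdd : ℚ) = f (inl m) - f (inl (φ k m)) := by
    have hconj : (inr k * inl m : N ⋊[φ] H) = inl (φ k m) * inr k := by
      simp [SemidirectProduct.inl_aut]
    have := hf (inr k) (inl m)
    rw [hconj, hinl] at this
    simp only [crossedCocycle, SemidirectProduct.right_inr, SemidirectProduct.left_inl] at this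
    linarith
  obtain ⟨n, hn, μ, hμ⟩ := exists_int_hom_of_rat_hom
    (MonoidHom.mk' (fun m : N => Multiplicative.ofAdd (f (inl m))) fun m m' => by
      rw [map_mul, hinl, ofAdd_add])
  refine ⟨n, hn, μ, fun k m => Multiplicative.toAdd.injective ?_⟩
  have : (n : ℚ) * (β k m).toAdd = (μ m).toAdd - (μ (φ k m)).toAdd := by
    rw [hμ, hμ, hβf]
    simp only [MonoidHom.mk'_apply, toAdd_ofAdd]
    ring
  rw [toAdd_zpow, toAdd_div, smul_eq_mul]
  exact_mod_cast this

end Coboundary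

section Displacement

open scoped commutatorElement
open SemidirectProduct (inl inr)

/-- The displacement `α m * m⁻¹` of `m` under `α`, a commutator in any semidirect product by `α`;
`α` is unipotent when some iterate of it is trivial. -/
def displacement {N : Type*} [Group N] (α : MulAut N) (m : N) : N := α m * m⁻¹

theorem inl_displacement {N H : Type*} [Group N] [Group H] (φ : H →* MulAut N) (k : H) (m : N) :
    (inl (displacement (φ k) m) : N ⋊[φ] H) = ⁅(inr k : N ⋊[φ] H), (inl m : N ⋊[φ] H)⁆ := by
  simp [displacement, SemidirectProduct.inl_aut, commutatorElement_def]

theorem exists_displacement_iterate_eq_one {N H : Type*} [Group N] [Group H] (φ : H →* MulAut N)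
    [Group.IsNilpotent (N ⋊[φ] H)] (k : H) : ∃ c, ∀ m, (displacement (φ k))^[c] m = 1 := by
  have hmem (j : ℕ) (m : N) : (inl ((displacement (φ k))^[j] m) : N ⋊[φ] H) ∈
      Subgroup.lowerCentralSeries (⊤ : Subgroup (N ⋊[φ] H)) j := by
    induction j with
    | zero => simp
    | succ j ih =>
      rw [Function.iterate_succ_apply', inl_displacement, ← commutatorElement_inv]
      exact inv_mem (Subgroup.commutator_mem_commutator ih (Subgroup.mem_top _))
  obtain ⟨c, hc⟩ := Subgroup.nilpotent_iff_lowerCentralSeries.mp ‹Group.IsNilpotent (N ⋊[φ] H)›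
  exact ⟨c, fun m => SemidirectProduct.inl_injective <| by
    rw [map_one, ← Subgroup.mem_bot, ← hc]
    exact hmem c m⟩

theorem isMulTorsionFree_monoidHom (G A : Type*) [Monoid G] [CommMonoid A] [IsMulTorsionFree A] :
    IsMulTorsionFree (G →* A) :=
  Function.Injective.isMulTorsionFree (MonoidHom.coeFn G A) DFunLike.coe_injective

theorem exists_zpow_notMem_range {M : Type*} [Group M] [IsMulTorsionFree M] [Nontrivial M]
    (δ : M →* M) {c : ℕ} (hδ : ∀ x, δ^[c] x = 1) : ∃ x, ∀ n : ℤ, n ≠ 0 → x ^ n ∉ δ.range := by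
  induction c with
  | zero => exact absurd hδ (by simpa using exists_ne (1 : M))
  | succ c ih =>
    by_cases hc : ∀ x, δ^[c] x = 1
    · exact ih hc
    · obtain ⟨x, hx⟩ := not_forall.mp hc
      refine ⟨x, fun n hn ⟨y, hy⟩ => hx ?_⟩
      rw [← IsMulTorsionFree.zpow_eq_one_iff_left hn, ← iterate_map_zpow, ← hy,
        ← Function.iterate_succ_apply, hδ]

variable {N A : Type*} [Group N] [CommGroup A]

/-- The operator `μ ↦ (μ ∘ α) / μ` on the dual of `N`, transpose to `displacement α`. -/
def displacementDual (α : MulAut N) : (N →* A) →* (N →* A) :=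
  MonoidHom.compHom' α.toMonoidHom / MonoidHom.id _

theorem displacementDual_apply (α : MulAut N) (μ : N →* A) (m : N) :
    displacementDual α μ m = μ (α m) / μ m := rfl

theorem displacementDual_iterate_apply (α : MulAut N) (j : ℕ) (μ : N →* A) (m : N) :
    (displacementDual α)^[j] μ m = μ ((displacement α)^[j] m) := by
  induction j generalizing μ with
  | zero => rfl
  | succ j ih =>
    rw [Function.iterate_succ_apply, ih, Function.iterate_succ_apply', displacementDual_apply,
      displacement, map_mul, map_inv, div_eq_mul_inv]

end Displacement

section FG

open scoped Pointwise

variable {N H : Type*} [Group N] [Group H]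

theorem exists_fg_smul_eq_of_displacement {α : MulAut N} {c : ℕ}
    (hα : ∀ m, (displacement α)^[c] m = 1) {S : Set N} (hS : S.Finite) :
    ∃ P : Subgroup N, P.FG ∧ S ⊆ P ∧ α • P = P := by
  let y (s : N) (j : ℕ) : N := (displacement α)^[j] s
  have hα_apply (s : N) (j : ℕ) : α (y s j) = y s (j + 1) * y s j := by
    simp [y, Function.iterate_succ_apply', displacement]
  let T : Set N := Set.image2 y S (Set.Iic c)
  have hmem {s : N} (hs : s ∈ S) (j : ℕ) : y s j ∈ Subgroup.closure T := by
    rcases le_total j c with hj | hj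
    · exact Subgroup.subset_closure ⟨s, hs, j, hj, rfl⟩
    · obtain ⟨i, rfl⟩ := Nat.exists_eq_add_of_le hj
      simp only [y, Function.iterate_add_apply, hα, one_mem]
  have hinv {s : N} (hs : s ∈ S) (i j : ℕ) (hij : i + j = c) :
      α⁻¹ (y s j) ∈ Subgroup.closure T := by
    induction i generalizing j with
    | zero =>
      obtain rfl : j = c := by omega
      simp only [y, hα, map_one, one_mem]
    | succ i ih =>
      have hy : α⁻¹ (y s j) = (α⁻¹ (y s (j + 1)))⁻¹ * y s j := by
        rw [eq_inv_mul_iff_mul_eq, ← map_mul, ← hα_apply, MulAut.inv_apply_self]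
      exact hy ▸ mul_mem (inv_mem (ih (j + 1) (by omega))) (hmem hs j)
  refine ⟨Subgroup.closure T, ⟨(hS.image2 y (Set.finite_Iic c)).toFinset, by simp [T]⟩,
    fun s hs => hmem hs 0, le_antisymm ?_ ?_⟩
  · rw [Subgroup.smul_closure, Subgroup.closure_le, Set.smul_set_subset_iff]
    rintro _ ⟨s, hs, j, -, rfl⟩
    rw [MulAut.smul_def, hα_apply]
    exact mul_mem (hmem hs _) (hmem hs _)
  · rw [Subgroup.subset_pointwise_smul_iff, Subgroup.smul_closure, Subgroup.closure_le,
      Set.smul_set_subset_iff]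
    rintro _ ⟨s, hs, j, hj, rfl⟩
    exact hinv hs (c - j) j (Nat.sub_add_cancel hj)

theorem eq_top_of_forall_left_mem {φ : H →* MulAut N} {P : Subgroup N} (hP : ∀ k, φ k • P = P)
    {X : Set (N ⋊[φ] H)} (hX : Subgroup.closure X = ⊤) (hXP : ∀ x ∈ X, x.left ∈ P) : P = ⊤ := by
  have hφ (k : H) {m : N} (hm : m ∈ P) : φ k m ∈ P := by
    rw [← hP k]
    exact Subgroup.smul_mem_pointwise_smul m (φ k) P hm
  let K : Subgroup (N ⋊[φ] H) :=
    { carrier := {g | g.left ∈ P}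
      one_mem' := one_mem P
      mul_mem' := fun hg hh => mul_mem hg (hφ _ hh)
      inv_mem' := fun hg => hφ _ (inv_mem hg) }
  have hK : K = ⊤ := top_unique (hX ▸ (Subgroup.closure_le K).mpr hXP)
  exact (Subgroup.eq_top_iff' P).mpr fun m =>
    show SemidirectProduct.inl m ∈ K from hK ▸ Subgroup.mem_top _

theorem fg_of_fg_semidirectProduct_int (φ : Multiplicative ℤ →* MulAut N)
    [Group.FG (N ⋊[φ] Multiplicative ℤ)] [Group.IsNilpotent (N ⋊[φ] Multiplicative ℤ)] :
    Group.FG N := by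
  obtain ⟨X, hX, hfin⟩ := Group.fg_iff.mp ‹Group.FG (N ⋊[φ] Multiplicative ℤ)›
  obtain ⟨c, hc⟩ := exists_displacement_iterate_eq_one φ (.ofAdd 1)
  obtain ⟨P, hPfg, hXP, hP⟩ := exists_fg_smul_eq_of_displacement hc (hfin.image (·.left))
  have hφP (k : Multiplicative ℤ) : φ k • P = P := by
    have hk : φ k = φ (.ofAdd 1) ^ k.toAdd := by
      rw [← map_zpow, ← ofAdd_zsmul, smul_eq_mul, mul_one, ofAdd_toAdd]
    have hstab : φ (.ofAdd 1) ∈ MulAction.stabilizer (MulAut N) P := hP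
    exact hk ▸ zpow_mem hstab k.toAdd
  rw [Group.fg_def, ← eq_top_of_forall_left_mem hφP hX fun x hx => hXP ⟨x, hx, rfl⟩]
  exact hPfg

end FG

section SemidirectProductInt

theorem exists_finiteType_cocycle_semidirectProduct {N : Type*} [Group N] [Group.FG N]
    (φ : Multiplicative ℤ →* MulAut N) [Group.IsNilpotent (N ⋊[φ] Multiplicative ℤ)]
    [Nontrivial (N →* Multiplicative ℤ)] :
    ∃ σ : N ⋊[φ] Multiplicative ℤ → N ⋊[φ] Multiplicative ℤ → ℤ,
      IsTwoCocycle σ ∧ ¬ IsRationalCoboundary σ ∧ ∀ n, n ≠ 0 → IsFiniteTypeMod σ n := by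
  obtain ⟨c, hc⟩ := exists_displacement_iterate_eq_one φ (.ofAdd 1)
  have := isMulTorsionFree_monoidHom N (Multiplicative ℤ)
  obtain ⟨ν, hν⟩ := exists_zpow_notMem_range
    (displacementDual (A := Multiplicative ℤ) (φ (.ofAdd 1))) (c := c)
    fun μ => MonoidHom.ext fun m => by
      rw [displacementDual_iterate_apply, hc, map_one, MonoidHom.one_apply]
  obtain ⟨β, hβ, hβν⟩ := exists_isCrossedHom_apply_ofAdd_one φ ν
  refine ⟨crossedCocycle φ β, hβ.isTwoCocycle, fun hσ => ?_, fun n => hβ.isFiniteTypeMod⟩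
  obtain ⟨n, hn, μ, hμ⟩ := hβ.exists_zpow_eq_of_isRationalCoboundary hσ
  refine hν n hn ⟨μ⁻¹, MonoidHom.ext fun m => ?_⟩
  rw [← hβν, map_inv, MonoidHom.inv_apply, displacementDual_apply, inv_div]
  exact (hμ _ m).symm

theorem exists_mulEquiv_semidirectProduct_int {G : Type*} [Group G] {π : G →* Multiplicative ℤ}
    (hπ : Function.Surjective π) :
    ∃ φ : Multiplicative ℤ →* MulAut π.ker, Nonempty (G ≃* π.ker ⋊[φ] Multiplicative ℤ) := by
  obtain ⟨t, ht⟩ := hπ (.ofAdd 1)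
  let E : GroupExtension π.ker G (Multiplicative ℤ) :=
    { inl := π.ker.subtype
      rightHom := π
      inl_injective := π.ker.subtype_injective
      range_inl_eq_ker_rightHom := π.ker.range_subtype
      rightHom_surjective := hπ }
  have hsplit : π.comp (zpowersHom G t) = MonoidHom.id _ := MonoidHom.ext_mint (by simp [ht])
  let s : E.Splitting :=
    { zpowersHom G t with rightInverse_rightHom := fun k => DFunLike.congr_fun hsplit k }
  exact ⟨s.conjAct, ⟨s.semidirectProductMulEquiv.symm⟩⟩

theorem nontrivial_ker_of_isEmpty_mulEquiv {G H : Type*} [Group G] [Group H]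
    (hGH : IsEmpty (G ≃* H)) {π : G →* H} (hπ : Function.Surjective π) : Nontrivial π.ker := by
  rw [Subgroup.nontrivial_iff_ne_bot, Ne, MonoidHom.ker_eq_bot_iff]
  exact fun hinj => hGH.false (MulEquiv.ofBijective π ⟨hinj, hπ⟩)

end SemidirectProductInt

/-- A finitely generated torsion-free nilpotent group which is neither trivial
nor infinite cyclic carries a ℤ-valued 2-cocycle `σ` of finite type pairing nontrivially
with some 2-cycle `c`. -/
theorem stmt3 {Γ : Type*} [Group Γ] [Group.FG Γ] [Group.IsNilpotent Γ]
    (htf : ∀ g : Γ, g ≠ 1 → ¬ IsOfFinOrder g)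
    (hnontriv : Nontrivial Γ) (hnotZ : IsEmpty (Γ ≃* Multiplicative ℤ)) :
    ∃ (σ : Γ → Γ → ℤ) (c : (Γ × Γ) →₀ ℤ),
      IsTwoCocycle σ ∧ IsTwoCycle c ∧ pairInt σ c ≠ 0 ∧
      ∀ N : ℕ, ∃ n : ℕ, N < n ∧
        ∃ (Q : Type) (_ : Group Q) (_ : Fintype Q) (q : Γ →* Q),
          Function.Surjective q ∧
          ∃ σ' : Q → Q → ZMod n, ∀ g h : Γ, ((σ g h : ℤ) : ZMod n) = σ' (q g) (q h) := by
  obtain ⟨π, hπ⟩ := exists_surjective_int_of_isNilpotent htf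
  obtain ⟨φ, ⟨e⟩⟩ := exists_mulEquiv_semidirectProduct_int hπ
  have : Group.FG (π.ker ⋊[φ] Multiplicative ℤ) :=
    Group.fg_of_surjective (f := e.toMonoidHom) e.surjective
  have : Group.IsNilpotent (π.ker ⋊[φ] Multiplicative ℤ) := Group.nilpotent_of_mulEquiv e
  have : Group.FG π.ker := fg_of_fg_semidirectProduct_int φ
  have : Nontrivial π.ker := nontrivial_ker_of_isEmpty_mulEquiv hnotZ hπ
  obtain ⟨χ, hχ⟩ := exists_surjective_int_of_isNilpotent (not_isOfFinOrder_subgroup htf π.ker)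
  have : Nontrivial (π.ker →* Multiplicative ℤ) := nontrivial_monoidHom_of_surjective hχ
  obtain ⟨σ, hσ, hnc, hft⟩ := exists_finiteType_cocycle_semidirectProduct φ
  obtain ⟨c, hc, hpair⟩ := exists_pairInt_ne_zero (σ := fun g h => σ (e g) (e h)) fun hcob =>
    hnc (by simpa using hcob.comp e.symm.toMonoidHom)
  exact ⟨_, c, hσ.comp e.toMonoidHom, hc, hpair, fun N => ⟨N + 1, N.lt_succ_self,
    (hft (N + 1) N.succ_ne_zero).comp (p := e.toMonoidHom) e.surjective⟩⟩
end
end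

section
/- Let Γ be a finitely generated torsion-free nilpotent group that is neither trivial nor infinite cyclic. Then H²(Γ;ℚ) ≠ 0, i.e., the second group cohomology of Γ with trivial coefficients in ℚ is a nontrivial ℚ-vector space. -/
/-!
Suppose that `H²(Γ; R) = 0` for the trivial module `R`, and let `φ : Γ → R⟦X⟧` be a multiplicative
character whose values have constant coefficient `1`. Since `H²` contains the obstructions to
lifting 1-cocycles along `R⟦X⟧ / (Xⁿ⁺¹) → R⟦X⟧ / (Xⁿ)`, every homomorphism `a : Γ → R` lifts to a
`φ`-twisted 1-cocycle `c` modulo any power of `X`. If `φ z = 1`, then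
`c ⁅z, y⁆ = (1 - φ y) * c z`. A surjection `(a, b) : Γ → ℤ²` provides `z`, `y` with
`(a, b) z = (1, 0)` and `b y = 1`; for `φ g = (1 + X) ^ b g` the `m`-fold commutator
`⁅…⁅z, y⁆, …, y⁆` then has `c`-value `(-X) ^ m * c z`, which is nonzero modulo
`Xᵐ⁺¹`, so that `Γ` is not nilpotent.

It remains to map a noncyclic finitely generated torsion-free nilpotent group onto `ℤ²`. Dividing
by the center preserves torsion-freeness, and a group which is cyclic modulo its center is
abelian; this reduces the problem to a free abelian group of rank at least two.
-/

open PowerSeries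
open scoped commutatorElement IsMulCommutative

universe u

section Commutators

variable {G : Type*} [Group G]

theorem commutatorElement_pow_right_of_commute {g h : G} (hc : Commute ⁅g, h⁆ h) (n : ℕ) :
    ⁅g, h ^ n⁆ = ⁅g, h⁆ ^ n := by
  have hconj : g * h * g⁻¹ = ⁅g, h⁆ * h := by simp [commutatorElement_def]
  rw [commutatorElement_def, ← conj_pow, hconj, hc.mul_pow, mul_inv_cancel_right]

theorem map_commutatorElement_eq_one {M : Type*} [MulOneClass M] {φ : G →* M} {z : G}
    (hz : φ z = 1) (y : G) : φ ⁅z, y⁆ = 1 := by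
  have hconj : y * z⁻¹ * y⁻¹ ∈ φ.ker := φ.normal_ker.conj_mem _ (inv_mem hz) y
  rw [commutatorElement_def, mul_assoc, mul_assoc, ← mul_assoc y]
  exact mul_mem (S := Subgroup G) hz hconj

theorem iterate_commutatorElement_mem_lowerCentralSeries (z y : G) (m : ℕ) :
    (⁅·, y⁆)^[m] z ∈ (⊤ : Subgroup G).lowerCentralSeries m := by
  induction m with
  | zero => simp
  | succ m ih =>
    rw [Function.iterate_succ_apply', Subgroup.lowerCentralSeries_succ]
    exact Subgroup.commutator_mem_commutator ih (Subgroup.mem_top y)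

theorem iterate_commutatorElement_nilpotencyClass [Group.IsNilpotent G] (z y : G) :
    (⁅·, y⁆)^[Group.nilpotencyClass G] z = 1 := by
  simpa only [Subgroup.lowerCentralSeries_nilpotencyClass, Subgroup.mem_bot] using
    iterate_commutatorElement_mem_lowerCentralSeries z y (Group.nilpotencyClass G)

end Commutators

section TwistedCocycles

variable {A Γ : Type*} [CommRing A] [Group Γ]

/-- `IsCocycleMod φ t c` says that `c` is a 1-cocycle modulo `t`, where `Γ` acts on `A` by
multiplication with the character `φ`. Divisibility by `t` stands in for cocycles with values in
`A ⧸ (t)`, so that lifting to a multiple of `t` keeps the type of `c`. -/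
def IsCocycleMod (φ : Γ →* A) (t : A) (c : Γ → A) : Prop :=
  ∀ g h, t ∣ φ g * c h - c (g * h) + c g

namespace IsCocycleMod

variable {φ : Γ →* A} {t : A} {c : Γ → A}

theorem dvd_map_one (hc : IsCocycleMod φ t c) : t ∣ c 1 := by
  simpa using hc 1 1

theorem dvd_map_commutatorElement_sub (hc : IsCocycleMod φ t c) {z : Γ} (hz : φ z = 1) (y : Γ) :
    t ∣ c ⁅z, y⁆ - (1 - φ y) * c z := by
  have hzy : ⁅z, y⁆ * (y * z) = z * y := by simp [commutatorElement_def, mul_assoc]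
  have h₁ := hc ⁅z, y⁆ (y * z)
  have h₂ := hc y z
  have h₃ := hc z y
  rw [hzy, map_commutatorElement_eq_one hz] at h₁
  rw [hz] at h₃
  convert (h₁.add h₂).sub h₃ using 1
  ring

theorem dvd_map_iterate_commutatorElement_sub (hc : IsCocycleMod φ t c) {z : Γ} (hz : φ z = 1)
    (y : Γ) (m : ℕ) : t ∣ c ((⁅·, y⁆)^[m] z) - (1 - φ y) ^ m * c z := by
  induction m generalizing z with
  | zero => simp
  | succ m ih =>
    have hstep := (hc.dvd_map_commutatorElement_sub hz y).mul_left ((1 - φ y) ^ m)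
    convert (ih (map_commutatorElement_eq_one hz y)).add hstep using 1
    rw [Function.iterate_succ_apply]
    ring

theorem dvd_one_sub_pow_nilpotencyClass_mul [Group.IsNilpotent Γ] (hc : IsCocycleMod φ t c) {z : Γ}
    (hz : φ z = 1) (y : Γ) : t ∣ (1 - φ y) ^ Group.nilpotencyClass Γ * c z := by
  have h := hc.dvd_map_iterate_commutatorElement_sub hz y (Group.nilpotencyClass Γ)
  rw [iterate_commutatorElement_nilpotencyClass] at h
  exact (dvd_iff_dvd_of_dvd_sub h).1 hc.dvd_map_one

end IsCocycleMod

theorem cocycle_identity_of_eq_mul {φ : Γ →* A} {t : A} (ht : IsLeftRegular t) {c : Γ → A}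
    {d : Γ → Γ → A} (hd : ∀ g h, φ g * c h - c (g * h) + c g = t * d g h) (g h j : Γ) :
    d (g * h) j + d g h = φ g * d h j + d g (h * j) := by
  apply ht
  have hgh := hd (g * h) j
  have hhj := hd g (h * j)
  rw [map_mul] at hgh
  rw [← mul_assoc] at hhj
  linear_combination φ g * hd h j - hgh + hhj - hd g h

end TwistedCocycles

section OneAddXPow

variable (R : Type*) [CommRing R]

/-- The character `k ↦ (1 + X) ^ k` of the infinite cyclic group. Composed with a homomorphism
`b : Γ → ℤ` it deforms the trivial `Γ`-module `R` to a module `R⟦X⟧` over any base ring, where the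
exponential `exp (b g * X)` would require rational coefficients. -/
noncomputable def oneAddXPow : Multiplicative ℤ →* R⟦X⟧ :=
  (Units.coeHom _).comp <| zpowersHom _ <| IsUnit.unit <|
    show IsUnit (1 + X : R⟦X⟧) from isUnit_iff_constantCoeff.2 (by simp)

@[simp]
theorem oneAddXPow_ofAdd_one : oneAddXPow R (.ofAdd 1) = 1 + X := by
  simp [oneAddXPow]

@[simp]
theorem constantCoeff_oneAddXPow (k : Multiplicative ℤ) : constantCoeff (oneAddXPow R k) = 1 := by
  have h : (constantCoeff (R := R)).toMonoidHom.comp (oneAddXPow R) = 1 :=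
    MonoidHom.ext_mint (by simp)
  exact DFunLike.congr_fun h k

end OneAddXPow

section SecondCohomology

variable {R Γ : Type u} [CommRing R] [Group Γ]

theorem exists_eq_coboundary_of_subsingleton_H2
    (hH : Subsingleton (groupCohomology (Rep.trivial R Γ R) 2)) {f : Γ → Γ → R}
    (hf : ∀ g h j, f (g * h) j + f g h = f h j + f g (h * j)) :
    ∃ s : Γ → R, ∀ g h, f g h = s h - s (g * h) + s g := by
  have hmem : (fun p : Γ × Γ ↦ f p.1 p.2) ∈ groupCohomology.cocycles₂ (Rep.trivial R Γ R) :=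
    (groupCohomology.mem_cocycles₂_iff _).2 hf
  obtain ⟨s, hs⟩ := (groupCohomology.H2π_eq_zero_iff (A := Rep.trivial R Γ R) ⟨_, hmem⟩).1
    (Subsingleton.elim _ _)
  exact ⟨s, fun g h ↦ (congrFun hs (g, h)).symm⟩

section Lifting

variable {φ : Γ →* R⟦X⟧}

theorem IsCocycleMod.exists_lift (hH : Subsingleton (groupCohomology (Rep.trivial R Γ R) 2))
    (hφ : ∀ g, constantCoeff (φ g) = 1) {n : ℕ} {c : Γ → R⟦X⟧}
    (hc : IsCocycleMod φ (X ^ n) c) :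
    ∃ c', IsCocycleMod φ (X ^ (n + 1)) c' ∧ ∀ g, X ^ n ∣ c' g - c g := by
  choose d hd using show ∀ g h, ∃ d, φ g * c h - c (g * h) + c g = X ^ n * d from hc
  have hd₀ (g h j : Γ) : constantCoeff (d (g * h) j) + constantCoeff (d g h) =
      constantCoeff (d h j) + constantCoeff (d g (h * j)) := by
    simpa [hφ] using
      congrArg constantCoeff (cocycle_identity_of_eq_mul X_pow_mul_injective hd g h j)
  obtain ⟨s, hs⟩ := exists_eq_coboundary_of_subsingleton_H2 hH
    (f := fun g h ↦ constantCoeff (d g h)) hd₀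
  refine ⟨fun g ↦ c g - X ^ n * C (s g), fun g h ↦ ?_, fun g ↦ by simp⟩
  have hfactor : φ g * (c h - X ^ n * C (s h)) - (c (g * h) - X ^ n * C (s (g * h))) +
      (c g - X ^ n * C (s g)) = X ^ n * (d g h - (φ g * C (s h) - C (s (g * h)) + C (s g))) := by
    linear_combination hd g h
  rw [hfactor, pow_succ]
  refine mul_dvd_mul_left _ (X_dvd_iff.2 ?_)
  simp [hφ, hs]

theorem exists_isCocycleMod_of_subsingleton_H2
    (hH : Subsingleton (groupCohomology (Rep.trivial R Γ R) 2))
    (hφ : ∀ g, constantCoeff (φ g) = 1) (a : Γ →* Multiplicative R) (n : ℕ) :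
    ∃ c, IsCocycleMod φ (X ^ (n + 1)) c ∧ ∀ g, constantCoeff (c g) = (a g).toAdd := by
  induction n with
  | zero =>
    have hC : IsCocycleMod φ (X ^ (0 + 1)) fun g ↦ C (a g).toAdd := fun g h ↦ by
      rw [zero_add, pow_one, X_dvd_iff]
      simp [hφ]
    exact ⟨_, hC, fun g ↦ constantCoeff_C _⟩
  | succ n ih =>
    obtain ⟨c, hc, hca⟩ := ih
    obtain ⟨c', hc', hdvd⟩ := hc.exists_lift hH hφ
    refine ⟨c', hc', fun g ↦ ?_⟩
    have hconst := X_dvd_iff.1 ((dvd_pow_self X n.succ_ne_zero).trans (hdvd g))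
    rwa [map_sub, sub_eq_zero, hca] at hconst

end Lifting

theorem map_eq_one_of_subsingleton_H2 [Group.IsNilpotent Γ]
    (hH : Subsingleton (groupCohomology (Rep.trivial R Γ R) 2)) (a : Γ →* Multiplicative R)
    (b : Γ →* Multiplicative ℤ) {z y : Γ} (hz : b z = 1) (hy : b y = .ofAdd 1) : a z = 1 := by
  set m := Group.nilpotencyClass Γ
  obtain ⟨c, hc, hca⟩ := exists_isCocycleMod_of_subsingleton_H2 hH
    (φ := (oneAddXPow R).comp b) (fun g ↦ constantCoeff_oneAddXPow R (b g)) a m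
  have hdvd : X ^ m * X ∣ X ^ m * ((-1) ^ m * c z) := by
    have h := hc.dvd_one_sub_pow_nilpotencyClass_mul (z := z) (by simp [hz]) y
    have hφy : 1 - (oneAddXPow R).comp b y = -1 * X := by simp [hy]
    rwa [hφy, mul_pow, mul_right_comm, mul_comm, pow_succ] at h
  obtain ⟨w, hw⟩ := hdvd
  have hX : X ∣ c z := by
    rw [← (isUnit_one.neg.pow m).dvd_mul_left]
    exact ⟨w, X_pow_mul_cancel (k := m) (by rw [hw, mul_assoc])⟩
  rw [X_dvd_iff, hca] at hX
  exact hX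

variable (R) in
theorem nontrivial_H2_of_surjective [Nontrivial R] [Group.IsNilpotent Γ]
    {f : Γ →* Multiplicative (ℤ × ℤ)} (hf : Function.Surjective f) :
    Nontrivial (groupCohomology (Rep.trivial R Γ R) 2) := by
  by_contra hH
  obtain ⟨z, hz⟩ := hf (.ofAdd (1, 0))
  obtain ⟨y, hy⟩ := hf (.ofAdd (0, 1))
  have h := map_eq_one_of_subsingleton_H2 (not_nontrivial_iff_subsingleton.1 hH)
    (((Int.castAddHom R).comp (AddMonoidHom.fst ℤ ℤ)).toMultiplicative.comp f)
    ((AddMonoidHom.snd ℤ ℤ).toMultiplicative.comp f) (z := z) (y := y) (by simp [hz]) (by simp [hy])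
  simp [hz] at h

end SecondCohomology

section SurjectionOntoIntProdInt

theorem exists_surjective_prod_of_one_lt_finrank {R M : Type*} [CommRing R] [Nontrivial R]
    [AddCommGroup M] [Module R M] [Module.Free R M] [Module.Finite R M]
    (h : 1 < Module.finrank R M) : ∃ f : M →ₗ[R] R × R, Function.Surjective f := by
  let B := Module.finBasis R M
  let i : Fin (Module.finrank R M) := ⟨0, by lia⟩
  let j : Fin (Module.finrank R M) := ⟨1, h⟩
  have hij : i ≠ j := by simp [i, j]
  refine ⟨(B.coord i).prod (B.coord j), fun p ↦ ⟨p.1 • B i + p.2 • B j, ?_⟩⟩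
  ext <;> simp [hij, hij.symm]

theorem exists_surjective_int_prod_int_of_not_isCyclic_of_comm {G : Type*} [CommGroup G]
    [Group.FG G] [IsMulTorsionFree G] (hG : ¬ IsCyclic G) :
    ∃ f : G →* Multiplicative (ℤ × ℤ), Function.Surjective f := by
  have : Module.Finite ℤ (Additive G) := Module.Finite.iff_addGroup_fg.2 inferInstance
  have hrank : 1 < Module.finrank ℤ (Additive G) := by
    by_contra! h
    obtain ⟨v, hv⟩ := finrank_le_one_iff.1 h
    exact hG ⟨v.toMul, hv⟩
  obtain ⟨f, hf⟩ := exists_surjective_prod_of_one_lt_finrank hrank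
  exact ⟨f.toAddMonoidHom.toMultiplicativeRight, hf⟩

variable {G : Type*} [Group G]

open Subgroup in
theorem mem_center_of_pow_mem_center [IsMulTorsionFree (center G)] {z : G}
    (hz : ∀ g : G, ⁅g, z⁆ ∈ center G) {n : ℕ} (hn : n ≠ 0) (hzn : z ^ n ∈ center G) :
    z ∈ center G := by
  rw [mem_center_iff] at hzn ⊢
  intro g
  have hpow : ⁅g, z⁆ ^ n = 1 := by
    rw [← commutatorElement_pow_right_of_commute (mem_center_iff.1 (hz g) z).symm,
      commutatorElement_eq_one_iff_mul_comm]
    exact hzn g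
  have hone : (⟨⁅g, z⁆, hz g⟩ : center G) = 1 :=
    (pow_eq_one_iff_left hn).1 (Subtype.ext hpow)
  exact commutatorElement_eq_one_iff_mul_comm.1 (congrArg Subtype.val hone)

open Subgroup in
theorem isMulTorsionFree_center_quotient_center [IsMulTorsionFree (center G)] :
    IsMulTorsionFree (center (G ⧸ center G)) := by
  rw [isMulTorsionFree_iff_not_isOfFinOrder]
  rintro ⟨z, hz⟩ hne hfin
  obtain ⟨n, hn, hzn⟩ := isOfFinOrder_iff_pow_eq_one.1 hfin
  induction z using QuotientGroup.induction_on with | H z =>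
  have hcomm (g : G) : ⁅g, z⁆ ∈ center G := by
    rw [← QuotientGroup.eq_one_iff]
    exact commutatorElement_eq_one_iff_mul_comm.2 (mem_center_iff.1 hz g)
  have hpow : z ^ n ∈ center G := (QuotientGroup.eq_one_iff _).1 (congrArg Subtype.val hzn)
  have hmem := mem_center_of_pow_mem_center hcomm hn.ne' hpow
  exact hne (Subtype.ext ((QuotientGroup.eq_one_iff z).2 hmem))

theorem isMulTorsionFree_of_center_eq_top [IsMulTorsionFree (Subgroup.center G)]
    (hG : Subgroup.center G = ⊤) : IsMulTorsionFree G := by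
  have hmem (g : G) : g ∈ Subgroup.center G := hG ▸ Subgroup.mem_top g
  exact Function.Injective.isMulTorsionFree ((MonoidHom.id G).codRestrict (Subgroup.center G) hmem)
    fun _ _ h ↦ congrArg Subtype.val h

theorem exists_surjective_int_prod_int_of_not_isCyclic [Group.FG G] [Group.IsNilpotent G]
    [IsMulTorsionFree (Subgroup.center G)] (hG : ¬ IsCyclic G) :
    ∃ f : G →* Multiplicative (ℤ × ℤ), Function.Surjective f := by
  refine Group.nilpotent_center_quotient_ind
    (P := fun G _ _ ↦ Group.FG G → IsMulTorsionFree (Subgroup.center G) → ¬ IsCyclic G →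
      ∃ f : G →* Multiplicative (ℤ × ℤ), Function.Surjective f) G ?_ ?_ ‹_› ‹_› hG
  · exact fun G _ _ _ _ hG ↦ (hG inferInstance).elim
  · intro G _ _ ih _ _ hG
    by_cases hcyc : IsCyclic (G ⧸ Subgroup.center G)
    · have : IsMulCommutative G := isMulCommutative_of_isCyclic_quotient_center_self G
      have : IsMulTorsionFree G := isMulTorsionFree_of_center_eq_top Subgroup.center_eq_top
      exact exists_surjective_int_prod_int_of_not_isCyclic_of_comm hG
    · obtain ⟨f, hf⟩ := ih inferInstance isMulTorsionFree_center_quotient_center hcyc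
      exact ⟨f.comp (QuotientGroup.mk' _), hf.comp (QuotientGroup.mk'_surjective _)⟩

end SurjectionOntoIntProdInt

section TorsionFree

variable {G : Type*} [Group G]

theorem isMulTorsionFree_center_of_not_isOfFinOrder (htf : ∀ g : G, g ≠ 1 → ¬ IsOfFinOrder g) :
    IsMulTorsionFree (Subgroup.center G) :=
  isMulTorsionFree_iff_not_isOfFinOrder.2 fun z hz hfin ↦
    htf z (by simpa using hz) (Submonoid.isOfFinOrder_coe.2 hfin)

theorem nonempty_mulEquiv_int_of_isCyclic [Nontrivial G] [IsCyclic G]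
    (htf : ∀ g : G, g ≠ 1 → ¬ IsOfFinOrder g) : Nonempty (G ≃* Multiplicative ℤ) := by
  obtain ⟨g, hg⟩ := exists_ne (1 : G)
  have : Infinite G := not_finite_iff_infinite.1 fun _ ↦ htf g hg (isOfFinOrder_of_finite g)
  exact ⟨intCyclicMulEquiv.symm⟩

end TorsionFree

theorem stmt4_general (R : Type u) {Γ : Type u} [CommRing R] [Nontrivial R] [Group Γ] [Group.FG Γ]
    [Group.IsNilpotent Γ] [IsMulTorsionFree (Subgroup.center Γ)] (hΓ : ¬ IsCyclic Γ) :
    Nontrivial (groupCohomology (Rep.trivial R Γ R) 2) :=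
  have ⟨_, hf⟩ := exists_surjective_int_prod_int_of_not_isCyclic hΓ
  nontrivial_H2_of_surjective R hf

/-- A finitely generated torsion-free nilpotent group which is neither trivial
nor infinite cyclic has nonvanishing second rational cohomology (trivial coefficients). -/
theorem stmt4 {Γ : Type} [Group Γ] [Group.FG Γ] [Group.IsNilpotent Γ]
    (htf : ∀ g : Γ, g ≠ 1 → ¬ IsOfFinOrder g)
    (hnontriv : Nontrivial Γ) (hnotZ : IsEmpty (Γ ≃* Multiplicative ℤ)) :
    Nontrivial (groupCohomology (Rep.trivial ℚ Γ ℚ) 2) := by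
  have := isMulTorsionFree_center_of_not_isOfFinOrder htf
  exact stmt4_general ℚ fun _ ↦ not_isEmpty_iff.2 (nonempty_mulEquiv_int_of_isCyclic htf) hnotZ
end

section
/- Let G̃ be a group and z ∈ G̃ a central element of infinite order. The following are equivalent: (1) there exists a sequence (Γₖ)_{k∈ℕ} of finite-index subgroups of G̃ such that the intersection of the cyclic subgroup ⟨z⟩ with ⋂ₖ Γₖ is trivial; (2) the set of natural numbers n for which there exists a finite-index normal subgroup K of G̃ such that the image of z in the finite quotient G̃/K has order exactly n, is infinite. -/
/-!
If `z` has order `n` in `G ⧸ K`, then `z ^ m ∈ K ↔ n ∣ m`. If only finitely many orders occur in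
finite quotients, their product is a positive exponent `m` for which `z ^ m` lies in every normal
subgroup of finite index, hence, passing to normal cores, in every subgroup of finite index. If
infinitely many orders occur, no nonzero exponent is divisible by all of them, so no nontrivial
power of `z` lies in all the corresponding kernels.
-/

section

variable {G : Type*} [Group G]

/-- The orders of the images of `z` in the finite quotients of `G`. -/
def finiteQuotientOrders (z : G) : Set ℕ :=
  {n | ∃ (K : Subgroup G) (_ : K.Normal), K.FiniteIndex ∧
    orderOf (QuotientGroup.mk z : G ⧸ K) = n}

theorem zpow_mem_iff_orderOf_mk_dvd (K : Subgroup G) [K.Normal] (z : G) (m : ℤ) :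
    z ^ m ∈ K ↔ (orderOf (QuotientGroup.mk z : G ⧸ K) : ℤ) ∣ m := by
  rw [orderOf_dvd_iff_zpow_eq_one, ← QuotientGroup.mk_zpow, QuotientGroup.eq_one_iff]

theorem pos_of_mem_finiteQuotientOrders {z : G} {n : ℕ} (hn : n ∈ finiteQuotientOrders z) :
    0 < n := by
  obtain ⟨K, _, _, rfl⟩ := hn
  exact orderOf_pos _

theorem exists_pow_mem_of_finite_finiteQuotientOrders {z : G}
    (hz : (finiteQuotientOrders z).Finite) :
    ∃ m > 0, ∀ H : Subgroup G, H.FiniteIndex → z ^ m ∈ H := by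
  refine ⟨∏ n ∈ hz.toFinset, n, Finset.prod_pos fun n hn ↦
    pos_of_mem_finiteQuotientOrders (hz.mem_toFinset.1 hn), fun H _ ↦ H.normalCore_le ?_⟩
  rw [← zpow_natCast, zpow_mem_iff_orderOf_mk_dvd, Int.natCast_dvd_natCast]
  exact Finset.dvd_prod_of_mem _ <|
    hz.mem_toFinset.2 ⟨H.normalCore, inferInstance, inferInstance, rfl⟩

theorem infinite_finiteQuotientOrders_of_zpowers_inf_iInf_eq_bot {ι : Sort*} {z : G}
    (hz : ¬ IsOfFinOrder z) {Γ : ι → Subgroup G} (hfin : ∀ i, (Γ i).FiniteIndex)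
    (hbot : Subgroup.zpowers z ⊓ ⨅ i, Γ i = ⊥) : (finiteQuotientOrders z).Infinite := by
  intro hfinite
  obtain ⟨m, hm, hmem⟩ := exists_pow_mem_of_finite_finiteQuotientOrders hfinite
  have hpow : z ^ m ∈ Subgroup.zpowers z ⊓ ⨅ i, Γ i :=
    ⟨Subgroup.npow_mem_zpowers z m, Subgroup.mem_iInf.2 fun i ↦ hmem (Γ i) (hfin i)⟩
  rw [hbot, Subgroup.mem_bot] at hpow
  exact hz (isOfFinOrder_iff_pow_eq_one.2 ⟨m, hm, hpow⟩)

theorem eq_zero_of_infinite_of_forall_dvd {S : Set ℕ} (hS : S.Infinite) {m : ℤ}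
    (hdvd : ∀ n ∈ S, (n : ℤ) ∣ m) : m = 0 := by
  obtain ⟨n, hn, hlt⟩ := hS.exists_gt m.natAbs
  exact Int.eq_zero_of_dvd_of_natAbs_lt_natAbs (hdvd n hn) hlt

theorem zpowers_inf_iInf_eq_bot_of_infinite_range_orderOf {ι : Sort*} (z : G) (K : ι → Subgroup G)
    [∀ i, (K i).Normal]
    (hinf : (Set.range fun i ↦ orderOf (QuotientGroup.mk z : G ⧸ K i)).Infinite) :
    Subgroup.zpowers z ⊓ ⨅ i, K i = ⊥ := by
  rw [Subgroup.eq_bot_iff_forall]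
  rintro _ ⟨⟨m, rfl⟩, hmem⟩
  have hm : m = 0 := eq_zero_of_infinite_of_forall_dvd hinf <| Set.forall_mem_range.2 fun i ↦
    (zpow_mem_iff_orderOf_mk_dvd (K i) z m).1 (Subgroup.mem_iInf.1 hmem i)
  simp only [hm, zpow_zero]

theorem exists_seq_zpowers_inf_iInf_eq_bot {z : G} (hz : (finiteQuotientOrders z).Infinite) :
    ∃ Γ : ℕ → Subgroup G, (∀ k, (Γ k).FiniteIndex) ∧ Subgroup.zpowers z ⊓ ⨅ k, Γ k = ⊥ := by
  let order := hz.natEmbedding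
  choose K hnormal hfin hord using fun k ↦ (order k).2
  refine ⟨K, hfin, zpowers_inf_iInf_eq_bot_of_infinite_range_orderOf z K ?_⟩
  simp only [hord]
  exact Set.infinite_range_of_injective (Subtype.val_injective.comp order.injective)

theorem stmt7_general (z : G) (hzord : ¬ IsOfFinOrder z) :
    (∃ Γ : ℕ → Subgroup G, (∀ k, (Γ k).FiniteIndex) ∧
        Subgroup.zpowers z ⊓ (⨅ k, Γ k) = ⊥) ↔
      (finiteQuotientOrders z).Infinite :=
  ⟨fun ⟨_, hfin, hbot⟩ ↦ infinite_finiteQuotientOrders_of_zpowers_inf_iInf_eq_bot hzord hfin hbot,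
    exists_seq_zpowers_inf_iInf_eq_bot⟩

end

/-- For a central element `z` of infinite order in `G`, the existence of a
sequence of finite-index subgroups whose intersection meets `⟨z⟩` trivially is equivalent to
`z` having order exactly `n` in some finite quotient of `G` for infinitely many `n`. -/
theorem stmt7 {G : Type*} [Group G] (z : G) (hz : z ∈ Subgroup.center G)
    (hzord : ¬ IsOfFinOrder z) :
    (∃ Γ : ℕ → Subgroup G, (∀ k, (Γ k).FiniteIndex) ∧
        Subgroup.zpowers z ⊓ (⨅ k, Γ k) = ⊥) ↔
      {n : ℕ | ∃ (K : Subgroup G) (_ : K.Normal), K.FiniteIndex ∧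
        orderOf (QuotientGroup.mk z : G ⧸ K) = n}.Infinite :=
  stmt7_general z hzord
end

section
/- Suppose Γ is a torsion-free finitely generated nilpotent group with a Mal'cev basis (a₁,…,aₘ), and 1 → ℤ →(ι) Γ̃ →(φ) Γ → 1 is a central extension (ι injective with central image equal to ker φ, φ surjective). If ã₁,…,ãₘ ∈ Γ̃ satisfy φ(ãᵢ) = aᵢ for each i, and ã_{m+1} = ι(1), then (ã₁,…,ãₘ,ã_{m+1}) is a Mal'cev basis for Γ̃. -/
/-- The ordered product `a₁^{x₁} ⋯ aₘ^{xₘ}`. -/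
def normalForm {Γ : Type*} [Group Γ] {m : ℕ} (a : Fin m → Γ) (x : Fin m → ℤ) : Γ :=
  ((List.finRange m).map fun i => a i ^ x i).prod

/-- The subgroup `⟨aₖ₊₁, …, aₘ⟩` (0-indexed: generated by the `a j` with `k ≤ j`). -/
def malcevSubgroup {Γ : Type*} [Group Γ] {m : ℕ} (a : Fin m → Γ) (k : ℕ) : Subgroup Γ :=
  Subgroup.closure {g | ∃ j : Fin m, k ≤ (j : ℕ) ∧ g = a j}

/-- `(a₁,…,aₘ)` is a Mal'cev basis: every element has a unique normal form
`a₁^{x₁} ⋯ aₘ^{xₘ}`, and the subgroups `Γᵢ = ⟨aᵢ,…,aₘ⟩` form a central series. -/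
def IsMalcevBasis {Γ : Type*} [Group Γ] {m : ℕ} (a : Fin m → Γ) : Prop :=
  (∀ g : Γ, ∃! x : Fin m → ℤ, g = normalForm a x) ∧
  malcevSubgroup a 0 = ⊤ ∧
  ∀ k : ℕ, k < m → ⁅(⊤ : Subgroup Γ), malcevSubgroup a k⁆ ≤ malcevSubgroup a (k + 1)

/-!
The kernel of `φ` is the infinite cyclic central subgroup generated by `z = ι(1)`. Hence the tail
subgroups of `(ã₁, …, ãₘ, z)` are the preimages under `φ` of those of `(a₁, …, aₘ)`, and the
central series pulls back; its last nontrivial term `⟨z⟩` is central. For the normal form of `g`,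
the exponents of `ã₁, …, ãₘ` are those of `φ g`, and the remaining factor lies in `ker φ`, so it is
a unique power of `z`.
-/

section MalcevSubgroup

variable {G H : Type*} [Group G] [Group H] {m : ℕ}

theorem malcevSubgroup_eq_closure_image (b : Fin m → G) (k : ℕ) :
    malcevSubgroup b k = Subgroup.closure (b '' {j | k ≤ (j : ℕ)}) := by
  unfold malcevSubgroup
  congr 1
  ext g
  simp only [Set.mem_image, Set.mem_ofPred_eq, eq_comm]

theorem malcevSubgroup_eq_bot (b : Fin m → G) {k : ℕ} (hk : m ≤ k) : malcevSubgroup b k = ⊥ := by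
  have hempty : {j : Fin m | k ≤ (j : ℕ)} = ∅ :=
    Set.eq_empty_of_forall_notMem fun j hj => (j.isLt.trans_le hk).not_ge hj
  rw [malcevSubgroup_eq_closure_image, hempty, Set.image_empty, Subgroup.closure_empty]

theorem map_malcevSubgroup (φ : G →* H) (b : Fin m → G) (k : ℕ) :
    (malcevSubgroup b k).map φ = malcevSubgroup (φ ∘ b) k := by
  simp only [malcevSubgroup_eq_closure_image, MonoidHom.map_closure, Set.image_comp]

theorem malcevSubgroup_snoc (b : Fin m → G) (z : G) {k : ℕ} (hk : k ≤ m) :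
    malcevSubgroup (Fin.snoc b z : Fin (m + 1) → G) k =
      malcevSubgroup b k ⊔ Subgroup.zpowers z := by
  have hgen : (Fin.snoc b z : Fin (m + 1) → G) '' {j | k ≤ (j : ℕ)} =
      b '' {j | k ≤ (j : ℕ)} ∪ {z} := by
    ext g
    simp [Fin.exists_fin_succ', hk, eq_comm, or_comm]
  rw [malcevSubgroup_eq_closure_image, hgen, Subgroup.closure_union,
    ← malcevSubgroup_eq_closure_image, Subgroup.zpowers_eq_closure]

theorem malcevSubgroup_snoc_eq_comap {φ : G →* H} {z : G} (hker : φ.ker = Subgroup.zpowers z)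
    (b : Fin m → G) {k : ℕ} (hk : k ≤ m) :
    malcevSubgroup (Fin.snoc b z : Fin (m + 1) → G) k = (malcevSubgroup (φ ∘ b) k).comap φ := by
  rw [malcevSubgroup_snoc b z hk, ← hker, ← Subgroup.comap_map_eq, map_malcevSubgroup]

theorem commutator_top_comap_le {φ : G →* H} {K L : Subgroup H} (h : ⁅(⊤ : Subgroup H), K⁆ ≤ L) :
    ⁅(⊤ : Subgroup G), K.comap φ⁆ ≤ L.comap φ := by
  rw [← Subgroup.map_le_iff_le_comap, Subgroup.map_commutator]
  exact (Subgroup.commutator_mono le_top (Subgroup.map_comap_le φ K)).trans h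

theorem commutator_top_malcevSubgroup_snoc_le {φ : G →* H} {z : G}
    (hker : φ.ker = Subgroup.zpowers z) (hz : z ∈ Subgroup.center G) (b : Fin m → G)
    (hb : ∀ k < m, ⁅(⊤ : Subgroup H), malcevSubgroup (φ ∘ b) k⁆ ≤ malcevSubgroup (φ ∘ b) (k + 1))
    {k : ℕ} (hk : k ≤ m) :
    ⁅(⊤ : Subgroup G), malcevSubgroup (Fin.snoc b z : Fin (m + 1) → G) k⁆ ≤
      malcevSubgroup (Fin.snoc b z : Fin (m + 1) → G) (k + 1) := by
  obtain hlt | rfl := hk.lt_or_eq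
  · rw [malcevSubgroup_snoc_eq_comap hker b hk, malcevSubgroup_snoc_eq_comap hker b hlt]
    exact commutator_top_comap_le (hb k hlt)
  · have hcentral : Subgroup.zpowers z ≤ Subgroup.center G := Subgroup.zpowers_le.mpr hz
    rw [malcevSubgroup_snoc b z le_rfl, malcevSubgroup_eq_bot b le_rfl, bot_sup_eq,
      malcevSubgroup_eq_bot _ le_rfl, Subgroup.commutator_comm, le_bot_iff,
      Subgroup.commutator_eq_bot_iff_le_centralizer, Subgroup.coe_top, Subgroup.centralizer_univ]
    exact hcentral

end MalcevSubgroup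

section NormalForm

variable {G H : Type*} [Group G] [Group H] {m : ℕ}

theorem normalForm_snoc (b : Fin m → G) (z : G) (x : Fin m → ℤ) (n : ℤ) :
    normalForm (Fin.snoc b z : Fin (m + 1) → G) (Fin.snoc x n) = normalForm b x * z ^ n := by
  simp [normalForm, List.finRange_succ_last, Function.comp_def]

theorem map_normalForm (φ : G →* H) (b : Fin m → G) (x : Fin m → ℤ) :
    φ (normalForm b x) = normalForm (φ ∘ b) x := by
  simp [normalForm, map_list_prod, Function.comp_def]

theorem existsUnique_eq_normalForm_snoc {φ : G →* H} {z : G}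
    (hker : φ.ker = Subgroup.zpowers z) (hz : Function.Injective fun n : ℤ => z ^ n)
    (b : Fin m → G) {g : G} (hg : ∃! x : Fin m → ℤ, φ g = normalForm (φ ∘ b) x) :
    ∃! x : Fin (m + 1) → ℤ, g = normalForm (Fin.snoc b z : Fin (m + 1) → G) x := by
  obtain ⟨x, hx, hx_unique⟩ := hg
  have hmem : (normalForm b x)⁻¹ * g ∈ Subgroup.zpowers z := by
    rw [← hker, ← MonoidHom.eq_iff, map_normalForm, hx]
  obtain ⟨n, hn : z ^ n = (normalForm b x)⁻¹ * g⟩ := hmem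
  refine ⟨Fin.snoc x n, ?_, fun y hy => ?_⟩
  · simp only [normalForm_snoc, hn, mul_inv_cancel_left]
  · induction y using Fin.snocCases with
    | snoc y k =>
      rw [normalForm_snoc] at hy
      have hφz : φ (z ^ k) = 1 := by
        rw [← MonoidHom.mem_ker, hker]
        exact Subgroup.zpow_mem_zpowers z k
      have hyx : y = x := hx_unique y <| by
        simp only [hy, map_mul, map_normalForm, hφz, mul_one]
      have hkn : k = n := hz <| by
        simp only [hn, hy, hyx, inv_mul_cancel_left]
      rw [hyx, hkn]

end NormalForm

/-- If `Γ` is a torsion-free finitely generated nilpotent group with Mal'cev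
basis `(a₁,…,aₘ)` and `1 → ℤ → Γ̃ → Γ → 1` is a central extension, then lifts `ãᵢ` of the
`aᵢ` together with `ã_{m+1} = ι(1)` form a Mal'cev basis of `Γ̃`. -/
theorem stmt11 {Γ G : Type*} [Group Γ] [Group G] [Group.FG Γ] [Group.IsNilpotent Γ]
    (htf : ∀ g : Γ, g ≠ 1 → ¬ IsOfFinOrder g)
    {m : ℕ} (a : Fin m → Γ) (ha : IsMalcevBasis a)
    (ι : Multiplicative ℤ →* G) (φ : G →* Γ)
    (hι : Function.Injective ι) (hcent : ι.range ≤ Subgroup.center G)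
    (hker : ι.range = φ.ker) (hφ : Function.Surjective φ)
    (atil : Fin m → G) (hatil : ∀ i, φ (atil i) = a i) :
    IsMalcevBasis (Fin.snoc atil (ι (Multiplicative.ofAdd (1 : ℤ))) : Fin (m + 1) → G) := by
  obtain rfl : φ ∘ atil = a := funext hatil
  obtain ⟨z, rfl⟩ := (zpowersHom G).surjective ι
  obtain ⟨hnormal, hgen, hseries⟩ := ha
  have hker_z : φ.ker = Subgroup.zpowers z := hker.symm
  have hz_central : z ∈ Subgroup.center G := hcent ⟨Multiplicative.ofAdd 1, zpow_one z⟩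
  have hz_inj : Function.Injective fun n : ℤ => z ^ n := hι
  rw [zpowersHom_apply, toAdd_ofAdd, zpow_one]
  refine ⟨fun g => existsUnique_eq_normalForm_snoc hker_z hz_inj atil (hnormal (φ g)), ?_,
    fun k hk => commutator_top_malcevSubgroup_snoc_le hker_z hz_central atil hseries
      (Nat.le_of_lt_succ hk)⟩
  rw [malcevSubgroup_snoc_eq_comap hker_z atil m.zero_le, hgen, Subgroup.comap_top]
end
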